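/- Let W be an m×k random matrix distributed according to the SUO distribution, let z, z' ∈ ℝ^k satisfy ‖z‖² = ‖z'‖² = k and z ≠ z', and set c = (1/k) zᵀz' (so c ≠ 1). Let (y, y') be a pair of m-dimensional random vectors jointly Gaussian with mean 0 and covariance [[1, c], [c, 1]] ⊗ I_m. Then for n = max(k, m) ≥ 2, the 1st Wasserstein distance satisfies D_Wass((Wz, Wz'), (y, y')) ≤ 4m/(n−1); equivalently, for every 1-Lipschitz function g : ℝ^{2m} → ℝ, |E[g(Wz, Wz')] − E[g(y, y')]| ≤ 4m/(n−1). -/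

import Mathlib

open MeasureTheory ProbabilityTheory Matrix Kronecker
open scoped ENNReal NNReal

noncomputable section

instance {m n : Type*} : MeasurableSpace (Matrix m n ℝ) :=
  show MeasurableSpace (m → n → ℝ) from inferInstance

/-- `μ` is the Haar probability measure on the group `O(n)` of `n × n` real orthogonal
matrices: it is a probability measure, it is supported on orthogonal matrices, and it is
invariant under (left) translation by any orthogonal matrix. -/
def IsHaarO (n : ℕ) (μ : Measure (Matrix (Fin n) (Fin n) ℝ)) : Prop :=
  IsProbabilityMeasure μ ∧
  (∀ᵐ M ∂μ, Mᵀ * M = 1) ∧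
  ∀ Q : Matrix (Fin n) (Fin n) ℝ, Qᵀ * Q = 1 → μ.map (fun M => Q * M) = μ

/-- `μ` is the Haar probability measure on `SO(n)`: a probability measure supported on
orthogonal matrices of determinant one, invariant under left translation by `SO(n)`. -/
def IsHaarSO (n : ℕ) (μ : Measure (Matrix (Fin n) (Fin n) ℝ)) : Prop :=
  IsProbabilityMeasure μ ∧
  (∀ᵐ M ∂μ, Mᵀ * M = 1 ∧ M.det = 1) ∧
  ∀ Q : Matrix (Fin n) (Fin n) ℝ, Qᵀ * Q = 1 → Q.det = 1 →
    μ.map (fun M => Q * M) = μ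

/-- The map taking an `n × n` matrix to `√(n/k)` times its top-left `m × k` submatrix. -/
def suoOfHaar {m k n : ℕ} (hm : m ≤ n) (hk : k ≤ n)
    (M : Matrix (Fin n) (Fin n) ℝ) : Matrix (Fin m) (Fin k) ℝ :=
  Real.sqrt ((n : ℝ) / (k : ℝ)) • M.submatrix (Fin.castLE hm) (Fin.castLE hk)

/-- `ν` is the scaled-corrected uniform orthogonal (SUO) distribution on `m × k` matrices:
the law of `√(n/k) • W₀` where `n = max k m` and `W₀` is the top-left `m × k` submatrix of
a Haar-distributed `n × n` orthogonal matrix. -/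
def IsSUO (m k : ℕ) (ν : Measure (Matrix (Fin m) (Fin k) ℝ)) : Prop :=
  ∃ μ : Measure (Matrix (Fin (max k m)) (Fin (max k m)) ℝ),
    IsHaarO (max k m) μ ∧
    ν = μ.map (suoOfHaar (le_max_right k m) (le_max_left k m))

/-- The kernel function `κ_f(z, z') = (1/m) f(z)ᵀ f(z')` of the combined layer
`f(z) = φ(W z)`, with `φ` applied elementwise. -/
def kernelF {m k : ℕ} (φ : ℝ → ℝ) (W : Matrix (Fin m) (Fin k) ℝ)
    (z z' : Fin k → ℝ) : ℝ :=
  (∑ i, φ (W.mulVec z i) * φ (W.mulVec z' i)) / (m : ℝ)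

/-- The input covariance matrix `Σ_{z,z'} = (1/k) [[zᵀz, zᵀz'], [z'ᵀz, z'ᵀz']]`. -/
def covMat {k : ℕ} (z z' : Fin k → ℝ) : Matrix (Fin 2) (Fin 2) ℝ :=
  (k : ℝ)⁻¹ • !![z ⬝ᵥ z, z ⬝ᵥ z'; z' ⬝ᵥ z, z' ⬝ᵥ z']

/-- The approximate kernel function `κ̃_f(Σ) = E_{u ∼ N(0, Σ)}[φ(u₁) φ(u₂)]`, realized by
pushing a pair of independent standard Gaussians through the Cholesky factor of `Σ`. -/
def approxKernel (φ : ℝ → ℝ) (S : Matrix (Fin 2) (Fin 2) ℝ) : ℝ :=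
  ∫ p : ℝ × ℝ,
      φ (Real.sqrt (S 0 0) * p.1) *
      φ ((S 1 0 / Real.sqrt (S 0 0)) * p.1 +
          Real.sqrt (S 1 1 - (S 1 0) ^ 2 / S 0 0) * p.2)
    ∂((gaussianReal 0 1).prod (gaussianReal 0 1))

/-- `γ` is the law of a centered (jointly) Gaussian random vector indexed by `ι` with
covariance matrix `A`: every linear functional of it is a centered real Gaussian with the
corresponding variance. -/
def IsGaussianLaw {ι : Type*} [Fintype ι] (A : Matrix ι ι ℝ)
    (γ : Measure (ι → ℝ)) : Prop :=
  IsProbabilityMeasure γ ∧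
  ∀ l : ι → ℝ,
    γ.map (fun y => ∑ i, l i * y i) =
      gaussianReal 0 (Real.toNNReal (∑ i, ∑ j, l i * A i j * l j))

/-- The Frobenius (Hilbert–Schmidt) norm of a matrix. -/
def frobNorm {m n : ℕ} (M : Matrix (Fin m) (Fin n) ℝ) : ℝ :=
  Real.sqrt (∑ i, ∑ j, (M i j) ^ 2)

/-- The `ℓ²` operator norm of a square matrix. -/
def opNorm {d : ℕ} (A : Matrix (Fin d) (Fin d) ℝ) : ℝ :=
  ‖Matrix.toEuclideanCLM (𝕜 := ℝ) A‖

end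

/-!
Write `X M` for the vector with blocks `√n • (M *ᵥ v a)` restricted to `m` coordinates, where the
`v a` are orthonormal and `M` is Haar distributed. The rotation invariance of the law of `M`, in
its infinitesimal form, gives for every skew-symmetric `J` the integration by parts formula
`E[∂_{JM} F(M)] = 0`. Taking `J` in the planes of two coordinates shows that `X M` satisfies Stein's
identity with the explicit kernel `τ(x) v = v + (v - x vᵀ x) / (n - 1)`, which is close to the
identity because `x xᵀ` is close to `n • 1` in the mean.

The law of a random vector with Stein kernel `τ` has Wasserstein distance at most
`(E ‖τ - 1‖²)^(1/2)`, in the Hilbert-Schmidt norm, to the standard Gaussian: rotate one into the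
other and integrate by parts on both sides. The second and fourth moments needed to evaluate the
right-hand side follow from Stein's identity itself, so `E ‖τ - 1‖² ≤ (d² + d) / (n - 1)²` in
dimension `d`. A general family of vectors is a linear image of an orthonormal one, and the Gaussian
with the matching covariance is the image of the standard one under the same map.
-/

open scoped InnerProductSpace
open ContinuousLinearMap (rotation)

section InvariantFlow

theorem integral_deriv_eq_zero_of_measurePreserving {Ω : Type*} [MeasurableSpace Ω]
    {μ : Measure Ω} {Φ : ℝ → Ω → Ω} (hΦ : ∀ t, MeasurePreserving (Φ t) μ μ)
    {F : Ω → ℝ} (hF : Integrable F μ) {F' : ℝ → Ω → ℝ} (hF' : AEStronglyMeasurable (F' 0) μ)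
    {bound : Ω → ℝ} (hbound : Integrable bound μ) (hF'_le : ∀ᵐ ω ∂μ, ∀ t, ‖F' t ω‖ ≤ bound ω)
    (hderiv : ∀ᵐ ω ∂μ, ∀ t, HasDerivAt (fun s => F (Φ s ω)) (F' t ω) t) :
    ∫ ω, F' 0 ω ∂μ = 0 := by
  have hcomp (t : ℝ) : Integrable (fun ω => F (Φ t ω)) μ :=
    (hΦ t).integrable_comp_of_integrable hF
  have hconst (t : ℝ) : ∫ ω, F (Φ t ω) ∂μ = ∫ ω, F ω ∂μ := by
    rw [← integral_map (hΦ t).aemeasurable (by rw [(hΦ t).map_eq]; exact hF.1), (hΦ t).map_eq]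
  have hderiv_integral := (hasDerivAt_integral_of_dominated_loc_of_deriv_le (x₀ := 0)
    Filter.univ_mem (.of_forall fun t => (hcomp t).1) (hcomp 0) hF'
    (hF'_le.mono fun ω h t _ => h t) hbound (hderiv.mono fun ω h t _ => h t)).2
  simp only [hconst] at hderiv_integral
  exact hderiv_integral.unique (hasDerivAt_const _ _)

end InvariantFlow

section OrthogonalMatrix

open scoped Matrix.Norms.L2Operator

variable {κ : Type*} [Fintype κ] [DecidableEq κ]

instance {m n : Type*} [Countable m] [Countable n] : BorelSpace (Matrix m n ℝ) :=
  inferInstanceAs (BorelSpace (m → n → ℝ))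

/-- `μ` is carried by the orthogonal matrices and invariant under left translation by the special
orthogonal ones. The Haar measures of `O(n)` and of `SO(n)` both qualify, and this is all that the
Stein argument needs. -/
structure IsSpecialOrthogonalInvariant (μ : Measure (Matrix κ κ ℝ)) : Prop where
  ae_transpose_mul_self : ∀ᵐ M ∂μ, Mᵀ * M = 1
  map_mul_left : ∀ Q : Matrix κ κ ℝ, Qᵀ * Q = 1 → Q.det = 1 → μ.map (Q * ·) = μ

theorem norm_le_one_of_transpose_mul_self {M : Matrix κ κ ℝ} (hM : Mᵀ * M = 1) : ‖M‖ ≤ 1 := by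
  rcases subsingleton_or_nontrivial (Matrix κ κ ℝ) with _ | _
  · simp [Subsingleton.elim M 0]
  · refine (CStarRing.norm_of_mem_unitary ?_).le
    rw [Unitary.mem_iff, star_eq_conjTranspose, conjTranspose_eq_transpose_of_trivial]
    exact ⟨hM, mul_eq_one_comm.mp hM⟩

theorem transpose_exp_mul_exp_of_transpose_eq_neg {J : Matrix κ κ ℝ} (hJ : Jᵀ = -J) :
    (NormedSpace.exp J)ᵀ * NormedSpace.exp J = 1 := by
  rw [← Matrix.exp_transpose, hJ, ← Matrix.exp_add_of_commute _ _ (Commute.refl J).neg_left,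
    neg_add_cancel, NormedSpace.exp_zero]

theorem det_exp_of_transpose_eq_neg {J : Matrix κ κ ℝ} (hJ : Jᵀ = -J) :
    (NormedSpace.exp J).det = 1 := by
  set E : Matrix κ κ ℝ := NormedSpace.exp ((2 : ℝ)⁻¹ • J)
  have hE : Eᵀ * E = 1 :=
    transpose_exp_mul_exp_of_transpose_eq_neg (by rw [transpose_smul, hJ, smul_neg])
  have hJE : NormedSpace.exp J = E * E := by
    rw [← Matrix.exp_add_of_commute _ _ (Commute.refl _), ← two_smul ℝ, smul_smul]
    norm_num
  rw [hJE, det_mul]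
  simpa using congrArg det hE

theorem hasDerivAt_exp_smul_mul (J M : Matrix κ κ ℝ) (t : ℝ) :
    HasDerivAt (fun s : ℝ => NormedSpace.exp (s • J) * M)
      (J * (NormedSpace.exp (t • J) * M)) t := by
  simpa [mul_assoc] using (hasDerivAt_exp_smul_const' J t).mul_const M

theorem exists_forall_orthogonal_le {f : Matrix κ κ ℝ → ℝ} (hf : Continuous f) :
    ∃ C, ∀ M : Matrix κ κ ℝ, Mᵀ * M = 1 → f M ≤ C := by
  have : ProperSpace (Matrix κ κ ℝ) := FiniteDimensional.proper ℝ _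
  obtain ⟨C, hC⟩ := (isCompact_closedBall (0 : Matrix κ κ ℝ) 1).bddAbove_image hf.continuousOn
  exact ⟨C, fun M hM => hC ⟨M, by simpa using norm_le_one_of_transpose_mul_self hM, rfl⟩⟩

namespace IsSpecialOrthogonalInvariant

variable {μ : Measure (Matrix κ κ ℝ)}

theorem integrable [IsFiniteMeasure μ] (hμ : IsSpecialOrthogonalInvariant μ)
    {f : Matrix κ κ ℝ → ℝ} (hf : Continuous f) : Integrable f μ := by
  obtain ⟨C, hC⟩ := exists_forall_orthogonal_le hf.norm
  exact .of_bound hf.aestronglyMeasurable C (hμ.ae_transpose_mul_self.mono hC)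

theorem integrable_map [IsFiniteMeasure μ] (hμ : IsSpecialOrthogonalInvariant μ) {E : Type*}
    [TopologicalSpace E] [MeasurableSpace E] [BorelSpace E] {X : Matrix κ κ ℝ → E}
    (hX : Continuous X) {f : E → ℝ} (hf : Continuous f) : Integrable f (μ.map X) := by
  rw [integrable_map_measure hf.aestronglyMeasurable hX.aemeasurable]
  exact hμ.integrable (hf.comp hX)

theorem integral_fderiv_mul_eq_zero [IsFiniteMeasure μ] (hμ : IsSpecialOrthogonalInvariant μ)
    {F : Matrix κ κ ℝ → ℝ} (hF : ContDiff ℝ 1 F) {J : Matrix κ κ ℝ} (hJ : Jᵀ = -J) :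
    ∫ M, fderiv ℝ F M (J * M) ∂μ = 0 := by
  have hDF := hF.continuous_fderiv one_ne_zero
  obtain ⟨C, hC⟩ := exists_forall_orthogonal_le hDF.norm
  have hskew (t : ℝ) : (t • J)ᵀ = -(t • J) := by rw [transpose_smul, hJ, smul_neg]
  set R : ℝ → Matrix κ κ ℝ := fun t => NormedSpace.exp (t • J)
  have hR (t : ℝ) : (R t)ᵀ * R t = 1 := transpose_exp_mul_exp_of_transpose_eq_neg (hskew t)
  have hRM {M : Matrix κ κ ℝ} (hM : Mᵀ * M = 1) (t : ℝ) : (R t * M)ᵀ * (R t * M) = 1 := by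
    rw [transpose_mul, mul_assoc, ← mul_assoc _ (R t), hR, one_mul, hM]
  have hflow := integral_deriv_eq_zero_of_measurePreserving (μ := μ) (Φ := fun t M => R t * M)
    (F := F) (F' := fun t M => fderiv ℝ F (R t * M) (J * (R t * M))) (bound := fun _ => C * ‖J‖)
    (fun t => ⟨(continuous_const.matrix_mul continuous_id).measurable,
      hμ.map_mul_left _ (hR t) (det_exp_of_transpose_eq_neg (hskew t))⟩)
    (hμ.integrable hF.continuous) ?_ (integrable_const _) ?_ ?_
  · simpa [R] using hflow
  · refine Continuous.aestronglyMeasurable ?_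
    exact (hDF.comp (by fun_prop)).clm_apply (by fun_prop)
  · filter_upwards [hμ.ae_transpose_mul_self] with M hM t
    have hJRM : ‖J * (R t * M)‖ ≤ ‖J‖ :=
      (norm_mul_le _ _).trans (mul_le_of_le_one_right (norm_nonneg _)
        (norm_le_one_of_transpose_mul_self (hRM hM t)))
    have hDF_le := hC _ (hRM hM t)
    exact ((fderiv ℝ F _).le_opNorm _).trans
      (mul_le_mul hDF_le hJRM (norm_nonneg _) ((norm_nonneg _).trans hDF_le))
  · refine .of_forall fun M t => ?_
    exact (hF.differentiable one_ne_zero _).hasFDerivAt.comp_hasDerivAt t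
      (hasDerivAt_exp_smul_mul J M t)

theorem integral_mul_comp_add_eq_zero [IsFiniteMeasure μ] (hμ : IsSpecialOrthogonalInvariant μ)
    {E : Type*} [NormedAddCommGroup E] [NormedSpace ℝ E] (X : Matrix κ κ ℝ →L[ℝ] E)
    (ψ : Matrix κ κ ℝ →L[ℝ] ℝ) {φ : E → ℝ} (hφ : ContDiff ℝ 1 φ) {J : Matrix κ κ ℝ}
    (hJ : Jᵀ = -J) :
    ∫ M, ψ (J * M) * φ (X M) + fderiv ℝ φ (X M) (ψ M • X (J * M)) ∂μ = 0 := by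
  have hφX (M : Matrix κ κ ℝ) :=
    (hφ.differentiable one_ne_zero (X M)).hasFDerivAt.comp M X.hasFDerivAt
  have hF (M : Matrix κ κ ℝ) : HasFDerivAt (fun M => ψ M * φ (X M)) _ M :=
    (ψ.hasFDerivAt (x := M)).mul (hφX M)
  convert hμ.integral_fderiv_mul_eq_zero (F := fun M => ψ M * φ (X M)) (by fun_prop) hJ
    using 3 with M
  rw [(hF M).fderiv]
  simp [mul_comm, add_comm]

end IsSpecialOrthogonalInvariant

end OrthogonalMatrix

section GaussianIntegrationByParts

theorem norm_le_norm_zero_add_of_lipschitzWith {E F : Type*} [SeminormedAddCommGroup E]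
    [SeminormedAddCommGroup F] {f : E → F}
    {K : ℝ≥0} (hf : LipschitzWith K f) (x : E) : ‖f x‖ ≤ ‖f 0‖ + K * ‖x‖ := by
  have := hf.norm_sub_le x 0
  rw [sub_zero] at this
  linarith [norm_sub_norm_le (f x) (f 0)]

theorem integrable_comp_of_lipschitzWith {E Ω : Type*} [NormedAddCommGroup E]
    [MeasurableSpace Ω] {P : Measure Ω} [IsFiniteMeasure P] {g : E → ℝ} {K : ℝ≥0}
    (hgK : LipschitzWith K g) {X : Ω → E} (hX : Integrable X P) : Integrable (fun ω => g (X ω)) P :=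
  ((integrable_const ‖g 0‖).add (hX.norm.const_mul K)).mono'
    (hgK.continuous.comp_aestronglyMeasurable hX.1)
    (.of_forall fun ω => norm_le_norm_zero_add_of_lipschitzWith hgK (X ω))

variable {E : Type*} [NormedAddCommGroup E] [NormedSpace ℝ E]

theorem hasDerivAt_rotation (p : E × E) (θ : ℝ) :
    HasDerivAt (fun t => rotation t p) ((rotation θ p).2, -(rotation θ p).1) θ := by
  simp only [ContinuousLinearMap.rotation_apply]
  have hcos (x : E) := (Real.hasDerivAt_cos θ).smul_const x
  have hsin (x : E) := (Real.hasDerivAt_sin θ).smul_const x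
  convert ((hcos p.1).add (hsin p.2)).prodMk ((hsin p.1).neg.add (hcos p.2)) using 1
  · ext t <;> simp
  · ext <;> simp [add_comm]

theorem hasDerivAt_mul_strongDual_rotation {f : E → ℝ} (hf : Differentiable ℝ f)
    (ℓ : StrongDual ℝ E) (p : E × E) (θ : ℝ) :
    let q := rotation θ p
    HasDerivAt (fun t => f (rotation t p).1 *
      ℓ (rotation t p).2) (fderiv ℝ f q.1 q.2 * ℓ q.2 - f q.1 * ℓ q.1) θ := by
  intro q
  have hrot := hasDerivAt_rotation p θ
  have hfst := (hf q.1).hasFDerivAt.comp_hasDerivAt θ hrot.fst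
  have hsnd := ℓ.hasFDerivAt.comp_hasDerivAt θ hrot.snd
  exact (hfst.mul hsnd).congr_deriv (by simp [q, sub_eq_add_neg])

theorem norm_rotation_le (θ : ℝ) (p : E × E) : ‖rotation θ p‖ ≤ 2 * ‖p‖ := by
  have hcos (x : E) : ‖Real.cos θ • x‖ ≤ ‖x‖ := by
    rw [norm_smul]; exact mul_le_of_le_one_left (norm_nonneg _) (Real.abs_cos_le_one θ)
  have hsin (x : E) : ‖Real.sin θ • x‖ ≤ ‖x‖ := by
    rw [norm_smul]; exact mul_le_of_le_one_left (norm_nonneg _) (Real.abs_sin_le_one θ)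
  have h₁ := norm_fst_le p
  have h₂ := norm_snd_le p
  rw [ContinuousLinearMap.rotation_apply, Prod.norm_mk, neg_smul]
  refine max_le ((norm_add_le _ _).trans ?_) ((norm_add_le _ _).trans ?_)
  · linarith [hcos p.1, hsin p.2]
  · linarith [norm_neg (Real.sin θ • p.1), hsin p.1, hcos p.2]

section LipschitzBounds

variable {f : E → ℝ} {K : ℝ≥0} (hfK : LipschitzWith K f) (ℓ : StrongDual ℝ E)
  {r : ℝ} (x : E) {y : E}
include hfK

theorem norm_mul_strongDual_le_of_lipschitzWith (hx : ‖x‖ ≤ r) (hy : ‖y‖ ≤ r) :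
    ‖f x * ℓ y‖ ≤ (‖f 0‖ + K) * ‖ℓ‖ * (1 + r) ^ 2 := by
  have hfx := norm_le_norm_zero_add_of_lipschitzWith hfK x
  have hr : 0 ≤ r := (norm_nonneg x).trans hx
  have hKx : K * ‖x‖ ≤ K * r := by gcongr
  calc ‖f x * ℓ y‖ ≤ ‖f x‖ * (‖ℓ‖ * ‖y‖) := by rw [norm_mul]; gcongr; exact ℓ.le_opNorm y
    _ ≤ ((‖f 0‖ + K) * (1 + r)) * (‖ℓ‖ * (1 + r)) := by
      gcongr
      · nlinarith [norm_nonneg (f 0), K.coe_nonneg]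
      · linarith
    _ = (‖f 0‖ + K) * ‖ℓ‖ * (1 + r) ^ 2 := by ring

theorem norm_fderiv_mul_strongDual_le_of_lipschitzWith (hy : ‖y‖ ≤ r) :
    ‖fderiv ℝ f x y * ℓ y‖ ≤ (‖f 0‖ + K) * ‖ℓ‖ * (1 + r) ^ 2 := by
  have hDf := (fderiv ℝ f x).le_of_opNorm_le (norm_fderiv_le_of_lipschitz ℝ hfK) y
  calc ‖fderiv ℝ f x y * ℓ y‖ ≤ (K * ‖y‖) * (‖ℓ‖ * ‖y‖) := by
        rw [norm_mul]; gcongr; exact ℓ.le_opNorm y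
    _ = K * ‖ℓ‖ * ‖y‖ ^ 2 := by ring
    _ ≤ (‖f 0‖ + K) * ‖ℓ‖ * (1 + r) ^ 2 := by
      gcongr
      · exact le_add_of_nonneg_left (norm_nonneg _)
      · linarith

end LipschitzBounds

variable [CompleteSpace E] [SecondCountableTopology E] [MeasurableSpace E] [BorelSpace E]

theorem integrable_one_add_norm_sq (μ : Measure E) [IsGaussian μ] :
    Integrable (fun x => (1 + ‖x‖) ^ 2) μ :=
  ((memLp_const (1 : ℝ)).add (IsGaussian.memLp_two_id (μ := μ)).norm).integrable_sq

theorem integrable_of_norm_le_one_add_norm_sq {μ : Measure E} [IsGaussian μ] {H : E → ℝ}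
    (hH : Continuous H) {C : ℝ} (hHC : ∀ x, ‖H x‖ ≤ C * (1 + ‖x‖) ^ 2) : Integrable H μ :=
  ((integrable_one_add_norm_sq μ).const_mul C).mono' hH.aestronglyMeasurable (.of_forall hHC)

theorem integral_mul_strongDual_eq_integral_fderiv {μ : Measure E} [IsGaussian μ]
    (hμ : μ[id] = 0) (ℓ : StrongDual ℝ E) {f : E → ℝ} (hf : ContDiff ℝ 1 f) {K : ℝ≥0}
    (hfK : LipschitzWith K f) :
    ∫ x, f x * ℓ x ∂μ = ∫ x, ∫ y, fderiv ℝ f x y * ℓ y ∂μ ∂μ := by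
  set C := (‖f 0‖ + K) * ‖ℓ‖
  set G : E × E → ℝ := fun p => fderiv ℝ f p.1 p.2 * ℓ p.2
  set H : E × E → ℝ := fun p => f p.1 * ℓ p.1
  have hG : Continuous G :=
    (((hf.continuous_fderiv one_ne_zero).comp continuous_fst).clm_apply continuous_snd).mul
      (ℓ.continuous.comp continuous_snd)
  have hH : Continuous H := (hf.continuous.mul ℓ.continuous).comp continuous_fst
  have hG_le (p : E × E) : ‖G p‖ ≤ C * (1 + ‖p‖) ^ 2 :=
    norm_fderiv_mul_strongDual_le_of_lipschitzWith hfK ℓ _ (norm_snd_le p)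
  have hH_le (p : E × E) : ‖H p‖ ≤ C * (1 + ‖p‖) ^ 2 :=
    norm_mul_strongDual_le_of_lipschitzWith hfK ℓ _ (norm_fst_le p) (norm_fst_le p)
  have hG_int : Integrable G (μ.prod μ) := integrable_of_norm_le_one_add_norm_sq hG hG_le
  have hH_int : Integrable H (μ.prod μ) := integrable_of_norm_le_one_add_norm_sq hH hH_le
  have hsub_le (p : E × E) (θ : ℝ) : ‖(G - H) (rotation θ p)‖ ≤
      (8 * C) * (1 + ‖p‖) ^ 2 := by
    have hrot := norm_rotation_le θ p
    have hG_rot := hG_le (rotation θ p)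
    have hH_rot := hH_le (rotation θ p)
    calc ‖(G - H) (rotation θ p)‖
        ≤ 2 * C * (1 + ‖rotation θ p‖) ^ 2 :=
          (norm_sub_le _ _).trans (by linarith)
      _ ≤ 2 * C * (2 * (1 + ‖p‖)) ^ 2 := by gcongr; linarith
      _ = (8 * C) * (1 + ‖p‖) ^ 2 := by ring
  -- The derivative of `θ ↦ ∫∫ f(cos θ x + sin θ y) ℓ(-sin θ x + cos θ y)` at `0`.
  have hflow := integral_deriv_eq_zero_of_measurePreserving (μ := μ.prod μ)
    (Φ := fun θ => rotation θ)
    (fun θ => ⟨by fun_prop, IsGaussian.map_rotation_eq_self hμ θ⟩)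
    (F := fun p => f p.1 * ℓ p.2)
    (integrable_of_norm_le_one_add_norm_sq (by fun_prop) fun p =>
      norm_mul_strongDual_le_of_lipschitzWith hfK ℓ _ (norm_fst_le p) (norm_snd_le p))
    (F' := fun θ p => (G - H) (rotation θ p))
    (by fun_prop) ((integrable_one_add_norm_sq _).const_mul _) (.of_forall hsub_le)
    (.of_forall fun p θ =>
      hasDerivAt_mul_strongDual_rotation (hf.differentiable one_ne_zero) ℓ p θ)
  have hrot_zero (p : E × E) : rotation 0 p = p := by
    simp [ContinuousLinearMap.rotation_apply]
  simp only [hrot_zero, Pi.sub_apply] at hflow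
  rw [integral_sub hG_int hH_int, integral_prod _ hG_int,
    integral_fun_fst fun x => f x * ℓ x, sub_eq_zero] at hflow
  simpa using hflow.symm

end GaussianIntegrationByParts

section StandardGaussian

variable {E : Type*} [NormedAddCommGroup E] [InnerProductSpace ℝ E] [FiniteDimensional ℝ E]
  [MeasurableSpace E] [BorelSpace E]

theorem integral_inner_mul_inner_stdGaussian (u v : E) :
    ∫ x, ⟪u, x⟫_ℝ * ⟪v, x⟫_ℝ ∂stdGaussian E = ⟪u, v⟫_ℝ := by
  rw [← innerSL_apply_apply ℝ u v, ← covarianceBilin_stdGaussian,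
    covarianceBilin_apply IsGaussian.memLp_two_id]
  simp

theorem integral_mul_inner_stdGaussian {f : E → ℝ} (hf : ContDiff ℝ 1 f) {K : ℝ≥0}
    (hfK : LipschitzWith K f) (v : E) :
    ∫ x, f x * ⟪v, x⟫_ℝ ∂stdGaussian E = ∫ x, fderiv ℝ f x v ∂stdGaussian E := by
  have hL (L : StrongDual ℝ E) : ∫ x, L x * ⟪v, x⟫_ℝ ∂stdGaussian E = L v := by
    obtain ⟨u, rfl⟩ := (InnerProductSpace.toDual ℝ E).surjective L
    simpa using integral_inner_mul_inner_stdGaussian u v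
  have hparts := integral_mul_strongDual_eq_integral_fderiv (μ := stdGaussian E) (by simp)
    (innerSL ℝ v) hf hfK
  simpa only [innerSL_apply_apply, hL] using hparts

end StandardGaussian

section SteinKernel

variable {E : Type*} [NormedAddCommGroup E] [InnerProductSpace ℝ E]

/-- `τ` is a Stein kernel of `ρ`: it satisfies the integration by parts formula that characterises
the standard Gaussian measure when `τ = 1`. All `C¹` test functions are allowed, as `ρ` is meant
to have bounded support. -/
def IsSteinKernel [MeasurableSpace E] (ρ : Measure E) (τ : E → E →L[ℝ] E) : Prop :=
  ∀ φ : E → ℝ, ContDiff ℝ 1 φ → ∀ v : E,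
    ∫ x, φ x * ⟪v, x⟫_ℝ ∂ρ = ∫ x, fderiv ℝ φ x (τ x v) ∂ρ

theorem fderiv_comp_smul_add (g : E → ℝ) (c : ℝ) (y x v : E) :
    fderiv ℝ (fun u => g (c • u + y)) x v = c * fderiv ℝ g (c • x + y) v := by
  rw [fderiv_comp_smul (f := fun u => g (u + y)), fderiv_comp_add_right]
  simp

theorem integrable_fderiv_apply_of_lipschitzWith {Ω : Type*} [MeasurableSpace Ω] {P : Measure Ω}
    {g : E → ℝ} (hg : ContDiff ℝ 1 g) {K : ℝ≥0} (hgK : LipschitzWith K g) {W V : Ω → E}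
    (hW : AEStronglyMeasurable W P) (hV : Integrable V P) :
    Integrable (fun ω => fderiv ℝ g (W ω) (V ω)) P := by
  refine (hV.norm.const_mul (K : ℝ)).mono' ?_ (.of_forall fun ω =>
    (fderiv ℝ g _).le_of_opNorm_le (norm_fderiv_le_of_lipschitz ℝ hgK) _)
  have hDg : Continuous fun q : E × E => fderiv ℝ g q.1 q.2 :=
    ((hg.continuous_fderiv one_ne_zero).comp continuous_fst).clm_apply continuous_snd
  exact hDg.comp_aestronglyMeasurable (hW.prodMk hV.1)

variable [MeasurableSpace E] [FiniteDimensional ℝ E] [BorelSpace E] {ρ : Measure E}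
  [IsProbabilityMeasure ρ]

theorem integrable_inner_mul_inner_stdGaussian (u v : E) :
    Integrable (fun x => ⟪u, x⟫_ℝ * ⟪v, x⟫_ℝ) (stdGaussian E) :=
  (IsGaussian.memLp_two_id.const_inner u).integrable_mul (IsGaussian.memLp_two_id.const_inner v)

theorem integral_norm_sq_apply_stdGaussian {F : Type*} [NormedAddCommGroup F]
    [InnerProductSpace ℝ F] (A : E →L[ℝ] F) {ι : Type*} [Fintype ι] (b : OrthonormalBasis ι ℝ E) :
    ∫ z, ‖A z‖ ^ 2 ∂stdGaussian E = ∑ i, ‖A (b i)‖ ^ 2 := by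
  classical
  have hA (z : E) : ‖A z‖ ^ 2 =
      ∑ i, ∑ j, ⟪A (b i), A (b j)⟫_ℝ * (⟪b i, z⟫_ℝ * ⟪b j, z⟫_ℝ) := by
    conv_lhs => rw [← b.sum_repr' z, ← real_inner_self_eq_norm_sq]
    simp only [map_sum, map_smul, sum_inner, inner_sum, real_inner_smul_left,
      real_inner_smul_right]
    exact Finset.sum_congr rfl fun i _ => Finset.sum_congr rfl fun j _ => by
      rw [real_inner_comm (A (b i))]; ring
  have hint (i j : ι) : Integrable
      (fun z => ⟪A (b i), A (b j)⟫_ℝ * (⟪b i, z⟫_ℝ * ⟪b j, z⟫_ℝ)) (stdGaussian E) :=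
    (integrable_inner_mul_inner_stdGaussian _ _).const_mul _
  simp_rw [hA]
  rw [integral_finsetSum _ fun i _ => integrable_finsetSum _ fun j _ => hint i j]
  simp_rw [integral_finsetSum _ fun j _ => hint _ j, integral_const_mul,
    integral_inner_mul_inner_stdGaussian, b.inner_eq_ite]
  simp

section Interpolation

variable (hρ : MemLp id 2 ρ) {g : E → ℝ} (hg : ContDiff ℝ 1 g) {K : ℝ≥0} (hgK : LipschitzWith K g)

theorem integrable_fst_stdGaussian_prod :
    Integrable (fun p => p.1) ((stdGaussian E).prod ρ) :=
  IsGaussian.integrable_id.comp_fst ρ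

include hρ

theorem integrable_snd_stdGaussian_prod :
    Integrable (fun p => p.2) ((stdGaussian E).prod ρ) :=
  (hρ.integrable one_le_two).comp_snd _

include hgK

theorem integrable_rotation_mul_inner (θ : ℝ) :
    Integrable (fun p => g (rotation θ p).1 * ⟪p.1, p.2⟫_ℝ)
      ((stdGaussian E).prod ρ) := by
  have hρ_sq : Integrable (fun x => (1 + ‖x‖) ^ 2) ρ :=
    ((memLp_const (1 : ℝ)).add hρ.norm).integrable_sq
  refine (((integrable_one_add_norm_sq (stdGaussian E)).mul_prod hρ_sq).const_mul
    (‖g 0‖ + 2 * K)).mono' ?_ (.of_forall fun p => ?_)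
  · have := hgK.continuous
    exact Continuous.aestronglyMeasurable (by fun_prop)
  · have hrot := (norm_fst_le _).trans (norm_rotation_le θ p)
    have hp : ‖p‖ ≤ ‖p.1‖ + ‖p.2‖ := max_le_add_of_nonneg (norm_nonneg _) (norm_nonneg _)
    have hgp : ‖g (rotation θ p).1‖ ≤
        (‖g 0‖ + 2 * K) * ((1 + ‖p.1‖) * (1 + ‖p.2‖)) := by
      have := norm_le_norm_zero_add_of_lipschitzWith hgK (rotation θ p).1
      have hprod : 0 ≤ ‖p.1‖ * ‖p.2‖ := by positivity
      calc _ ≤ ‖g 0‖ + K * (2 * (‖p.1‖ + ‖p.2‖)) := this.trans (by gcongr; linarith)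
        _ ≤ _ := by nlinarith [norm_nonneg (g 0), norm_nonneg p.1, norm_nonneg p.2, K.coe_nonneg,
            mul_nonneg K.coe_nonneg hprod, mul_nonneg (norm_nonneg (g 0)) hprod]
    have hinner : ‖⟪p.1, p.2⟫_ℝ‖ ≤ (1 + ‖p.1‖) * (1 + ‖p.2‖) :=
      (norm_inner_le_norm _ _).trans (by gcongr <;> linarith)
    rw [norm_mul]
    refine (mul_le_mul hgp hinner (norm_nonneg _) (by positivity)).trans_eq (by ring)

include hg

theorem cos_mul_integral_fderiv_rotation_snd (θ : ℝ) :
    Real.cos θ * ∫ p, fderiv ℝ g (rotation θ p).1 p.2 ∂(stdGaussian E).prod ρ =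
      ∫ p, g (rotation θ p).1 * ⟪p.1, p.2⟫_ℝ ∂(stdGaussian E).prod ρ := by
  have hlip (x : E) : LipschitzWith (K * ‖Real.cos θ‖₊)
      fun z => g (Real.cos θ • z + Real.sin θ • x) := by
    refine hgK.comp ?_
    simpa using (lipschitzWith_smul (Real.cos θ)).add (LipschitzWith.const (Real.sin θ • x))
  rw [integral_prod_symm _ (integrable_rotation_mul_inner hρ hgK θ), ← integral_const_mul,
    integral_prod_symm _ ((integrable_fderiv_apply_of_lipschitzWith hg hgK (by fun_prop)
    (integrable_snd_stdGaussian_prod hρ)).const_mul _)]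
  congr! 2 with x
  have := integral_mul_inner_stdGaussian (f := fun z => g (Real.cos θ • z + Real.sin θ • x))
    (by fun_prop) (hlip x) x
  simp_rw [fderiv_comp_smul_add, fun z => real_inner_comm z x] at this
  exact this.symm

variable {τ : E → E →L[ℝ] E} (hτ : IsSteinKernel ρ τ) (hτ_mem : MemLp τ 2 ρ)

omit hρ hg hgK in
include hτ_mem in
theorem integrable_kernel_apply :
    Integrable (fun p : E × E => τ p.2 p.1) ((stdGaussian E).prod ρ) := by
  refine ((IsGaussian.integrable_id (μ := stdGaussian E)).norm.mul_prod
    (hτ_mem.integrable one_le_two).norm).mono' ?_ (.of_forall fun p => ?_)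
  · have : Continuous fun q : E × (E →L[ℝ] E) => q.2 q.1 := by fun_prop
    exact this.comp_aestronglyMeasurable (aestronglyMeasurable_id.comp_fst.prodMk hτ_mem.1.comp_snd)
  · exact ((τ p.2).le_opNorm p.1).trans_eq (mul_comm _ _)

include hτ hτ_mem in
theorem sin_mul_integral_fderiv_rotation_kernel (θ : ℝ) :
    Real.sin θ * ∫ p, fderiv ℝ g (rotation θ p).1 (τ p.2 p.1)
      ∂(stdGaussian E).prod ρ =
      ∫ p, g (rotation θ p).1 * ⟪p.1, p.2⟫_ℝ ∂(stdGaussian E).prod ρ := by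
  rw [integral_prod _ (integrable_rotation_mul_inner hρ hgK θ), ← integral_const_mul,
    integral_prod _ ((integrable_fderiv_apply_of_lipschitzWith hg hgK (by fun_prop)
    (integrable_kernel_apply hτ_mem)).const_mul _)]
  congr! 2 with z
  have := hτ (fun x => g (Real.sin θ • x + Real.cos θ • z)) (by fun_prop) z
  simp_rw [fderiv_comp_smul_add, add_comm (Real.sin θ • _)] at this
  exact this.symm

include hτ hτ_mem in
theorem integral_fderiv_rotation_snd_eq_sin_mul (θ : ℝ) :
    ∫ p, fderiv ℝ g (rotation θ p).1 (rotation θ p).2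
      ∂(stdGaussian E).prod ρ =
    Real.sin θ * ∫ p, fderiv ℝ g (rotation θ p).1 (τ p.2 p.1 - p.1)
      ∂(stdGaussian E).prod ρ := by
  have hint {V : E × E → E} (hV : Integrable V ((stdGaussian E).prod ρ)) :
      Integrable (fun p => fderiv ℝ g (rotation θ p).1 (V p))
        ((stdGaussian E).prod ρ) :=
    integrable_fderiv_apply_of_lipschitzWith hg hgK (by fun_prop) hV
  have hrot (p : E × E) : (rotation θ p).2 =
      Real.cos θ • p.2 - Real.sin θ • p.1 := by
    simp [ContinuousLinearMap.rotation_apply, sub_eq_neg_add]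
  have hfst := hint integrable_fst_stdGaussian_prod
  have hsnd := hint (integrable_snd_stdGaussian_prod hρ)
  simp_rw [hrot, map_sub, map_smul, smul_eq_mul]
  rw [integral_sub (hsnd.const_mul _) (hfst.const_mul _),
    integral_sub (hint (integrable_kernel_apply hτ_mem)) hfst, integral_const_mul,
    integral_const_mul, cos_mul_integral_fderiv_rotation_snd hρ hg hgK, mul_sub,
    sin_mul_integral_fderiv_rotation_kernel hρ hg hgK hτ hτ_mem]

omit hρ hg hgK in
include hτ_mem in
theorem memLp_kernel_apply_sub :
    MemLp (fun p : E × E => τ p.2 p.1 - p.1) 2 ((stdGaussian E).prod ρ) := by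
  have hmeas : AEStronglyMeasurable (fun p : E × E => τ p.2 p.1 - p.1) ((stdGaussian E).prod ρ) :=
    ((integrable_kernel_apply hτ_mem).sub integrable_fst_stdGaussian_prod).1
  have hτ_sq : Integrable (fun x => (‖τ x‖ + 1) ^ 2) ρ :=
    (hτ_mem.norm.add (memLp_const (1 : ℝ))).integrable_sq
  have hz_sq : Integrable (fun z : E => ‖z‖ ^ 2) (stdGaussian E) :=
    IsGaussian.memLp_two_id.norm.integrable_sq
  rw [memLp_two_iff_integrable_sq_norm hmeas]
  refine (hz_sq.mul_prod hτ_sq).mono' (by fun_prop) (.of_forall fun p => ?_)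
  rw [Real.norm_of_nonneg (by positivity), ← mul_pow]
  gcongr
  calc ‖τ p.2 p.1 - p.1‖ ≤ ‖τ p.2‖ * ‖p.1‖ + ‖p.1‖ :=
        (norm_sub_le _ _).trans (by gcongr; exact (τ p.2).le_opNorm _)
    _ = ‖p.1‖ * (‖τ p.2‖ + 1) := by ring

variable {ι : Type*} [Fintype ι] (b : OrthonormalBasis ι ℝ E)

omit hρ hg hgK in
include hτ_mem in
theorem integral_norm_kernel_apply_sub_le :
    ∫ p, ‖τ p.2 p.1 - p.1‖ ∂(stdGaussian E).prod ρ ≤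
      √(∫ x, ∑ i, ‖τ x (b i) - b i‖ ^ 2 ∂ρ) := by
  have hmem := memLp_kernel_apply_sub hτ_mem
  have hvar := variance_nonneg (fun p => ‖τ p.2 p.1 - p.1‖) ((stdGaussian E).prod ρ)
  rw [variance_eq_sub hmem.norm, sub_nonneg] at hvar
  refine Real.le_sqrt_of_sq_le (hvar.trans_eq ?_)
  simp_rw [Pi.pow_apply]
  rw [integral_prod_symm _ hmem.norm.integrable_sq]
  exact integral_congr_ae (.of_forall fun x =>
    integral_norm_sq_apply_stdGaussian (τ x - .id ℝ E) b)

include hτ hτ_mem in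
theorem norm_integral_fderiv_rotation_snd_le {θ : ℝ} (hθ : 0 ≤ Real.sin θ) :
    ‖∫ p, fderiv ℝ g (rotation θ p).1 (rotation θ p).2
      ∂(stdGaussian E).prod ρ‖ ≤
    Real.sin θ * (K * √(∫ x, ∑ i, ‖τ x (b i) - b i‖ ^ 2 ∂ρ)) := by
  rw [integral_fderiv_rotation_snd_eq_sin_mul hρ hg hgK hτ hτ_mem, norm_mul,
    Real.norm_of_nonneg hθ]
  gcongr
  refine (norm_integral_le_of_norm_le
    (((memLp_kernel_apply_sub hτ_mem).norm.integrable one_le_two).const_mul (K : ℝ))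
    (.of_forall fun p => (fderiv ℝ g _).le_of_opNorm_le
      (norm_fderiv_le_of_lipschitz ℝ hgK) _)).trans ?_
  rw [integral_const_mul]
  gcongr
  exact integral_norm_kernel_apply_sub_le hτ_mem b

theorem hasDerivAt_integral_comp_rotation_fst (θ : ℝ) :
    HasDerivAt (fun t => ∫ p, g (rotation t p).1 ∂(stdGaussian E).prod ρ)
      (∫ p, fderiv ℝ g (rotation θ p).1 (rotation θ p).2 ∂(stdGaussian E).prod ρ) θ := by
  have hid : Integrable (fun p => p) ((stdGaussian E).prod ρ) :=
    integrable_fst_stdGaussian_prod.prodMk (integrable_snd_stdGaussian_prod hρ)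
  have hrot (t : ℝ) : Integrable (rotation t) ((stdGaussian E).prod ρ) :=
    (rotation t).integrable_comp hid
  refine (hasDerivAt_integral_of_dominated_loc_of_deriv_le (bound := fun p => K * (2 * ‖p‖))
    (F := fun t (p : E × E) => g (rotation t p).1)
    (F' := fun t (p : E × E) => fderiv ℝ g (rotation t p).1 (rotation t p).2)
    Filter.univ_mem (.of_forall fun t => ?_) ?_ ?_ ?_ ?_ ?_).2
  · have := hg.continuous
    exact Continuous.aestronglyMeasurable (by fun_prop)
  · exact integrable_comp_of_lipschitzWith hgK (hrot θ).fst
  · exact (integrable_fderiv_apply_of_lipschitzWith hg hgK (by fun_prop) (hrot θ).snd).1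
  · refine .of_forall fun p t _ => ?_
    exact ((fderiv ℝ g _).le_of_opNorm_le (norm_fderiv_le_of_lipschitz ℝ hgK) _).trans
      (by gcongr; exact (norm_snd_le _).trans (norm_rotation_le t p))
  · exact (hid.norm.const_mul 2).const_mul _
  · exact .of_forall fun p t _ => (hg.differentiable one_ne_zero _).hasFDerivAt.comp_hasDerivAt t
      (hasDerivAt_rotation p t).fst

include hτ hτ_mem in
theorem norm_integral_sub_integral_stdGaussian_le_of_contDiff :
    ‖∫ x, g x ∂ρ - ∫ z, g z ∂stdGaussian E‖ ≤ K * √(∫ x, ∑ i, ‖τ x (b i) - b i‖ ^ 2 ∂ρ) := by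
  set δ := √(∫ x, ∑ i, ‖τ x (b i) - b i‖ ^ 2 ∂ρ)
  set h : ℝ → ℝ := fun t =>
    ∫ p, g (rotation t p).1 ∂(stdGaussian E).prod ρ
  have hh (t : ℝ) := hasDerivAt_integral_comp_rotation_fst hρ hg hgK t
  have h_zero : h 0 = ∫ z, g z ∂stdGaussian E := by
    simpa [h, ContinuousLinearMap.rotation_apply] using
      integral_fun_fst (μ := stdGaussian E) (ν := ρ) g
  have h_pi_div_two : h (Real.pi / 2) = ∫ x, g x ∂ρ := by
    simpa [h, ContinuousLinearMap.rotation_apply] using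
      integral_fun_snd (μ := stdGaussian E) (ν := ρ) g
  have hbound := image_norm_le_of_norm_deriv_right_le_deriv_boundary (a := 0) (b := Real.pi / 2)
    (f := fun t => h t - h 0) (B := fun t => (1 - Real.cos t) * (K * δ))
    (fun t _ => ((hh t).sub_const _).continuousAt.continuousWithinAt)
    (fun t _ => ((hh t).sub_const _).hasDerivWithinAt) (by simp)
    (fun t => by simpa using ((Real.hasDerivAt_cos t).const_sub 1).mul_const (K * δ))
    (fun t ht => norm_integral_fderiv_rotation_snd_le hρ hg hgK hτ hτ_mem b
      (Real.sin_nonneg_of_nonneg_of_le_pi ht.1 (by linarith [ht.2, Real.pi_pos])))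
    (Set.right_mem_Icc.2 (by positivity))
  simpa [h_zero, h_pi_div_two] using hbound

end Interpolation

theorem exists_contDiff_lipschitzWith_dist_le {E F : Type*} [NormedAddCommGroup E]
    [NormedSpace ℝ E] [FiniteDimensional ℝ E] [NormedAddCommGroup F] [NormedSpace ℝ F]
    [CompleteSpace F] {f : E → F} {K : ℝ≥0} (hf : LipschitzWith K f) {ε : ℝ} (hε : 0 < ε) :
    ∃ g : E → F, ContDiff ℝ 1 g ∧ LipschitzWith K g ∧ ∀ x, dist (g x) (f x) ≤ K * ε := by
  borelize E
  let μ : Measure E := .addHaar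
  let φ : ContDiffBump (0 : E) := ⟨ε / 2, ε, half_pos hε, half_lt_self hε⟩
  have hφ_smooth : ContDiff ℝ 1 (φ.normed μ) := φ.contDiff_normed
  have hf_loc : LocallyIntegrable f μ := hf.continuous.locallyIntegrable
  have hconv (x : E) : Integrable (fun t => φ.normed μ t • f (x - t)) μ :=
    (hφ_smooth.continuous.smul (hf.continuous.comp (by fun_prop))).integrable_of_hasCompactSupport
      φ.hasCompactSupport_normed.smul_right
  refine ⟨fun x => ∫ t, φ.normed μ t • f (x - t) ∂μ,
    φ.hasCompactSupport_normed.contDiff_convolution_left (.lsmul ℝ ℝ) hφ_smooth hf_loc,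
    .of_dist_le_mul fun x y => ?_, fun x => ?_⟩
  · have hle (t : E) : ‖φ.normed μ t • f (x - t) - φ.normed μ t • f (y - t)‖ ≤
        φ.normed μ t * (K * dist x y) := by
      rw [← smul_sub, norm_smul, Real.norm_of_nonneg (φ.nonneg_normed t), ← dist_eq_norm]
      gcongr
      · exact φ.nonneg_normed t
      · simpa using hf.dist_le_mul (x - t) (y - t)
    rw [dist_eq_norm, ← integral_sub (hconv x) (hconv y)]
    refine (norm_integral_le_of_norm_le (φ.integrable_normed.mul_const _)
      (.of_forall hle)).trans_eq ?_
    rw [integral_mul_const, φ.integral_normed, one_mul]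
  · refine φ.dist_normed_convolution_le hf.continuous.aestronglyMeasurable fun y hy => ?_
    exact (hf.dist_le_mul y x).trans (by gcongr; exact (Metric.mem_ball.1 hy).le)

theorem norm_integral_sub_integral_stdGaussian_le_of_isSteinKernel (hρ : MemLp id 2 ρ)
    {τ : E → E →L[ℝ] E} (hτ : IsSteinKernel ρ τ) (hτ_mem : MemLp τ 2 ρ)
    {ι : Type*} [Fintype ι] (b : OrthonormalBasis ι ℝ E)
    {g : E → ℝ} {K : ℝ≥0} (hgK : LipschitzWith K g) :
    ‖∫ x, g x ∂ρ - ∫ z, g z ∂stdGaussian E‖ ≤ K * √(∫ x, ∑ i, ‖τ x (b i) - b i‖ ^ 2 ∂ρ) := by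
  refine le_of_forall_pos_le_add fun ε hε => ?_
  obtain ⟨G, hG, hGK, hGg⟩ :=
    exists_contDiff_lipschitzWith_dist_le hgK (ε := ε / (2 * (K + 1))) (by positivity)
  have hclose (μ : Measure E) [IsProbabilityMeasure μ] (hμ : Integrable id μ) :
      ‖∫ x, g x ∂μ - ∫ x, G x ∂μ‖ ≤ ε / 2 := by
    rw [← integral_sub (integrable_comp_of_lipschitzWith (X := fun x => x) hgK hμ)
      (integrable_comp_of_lipschitzWith (X := fun x => x) hGK hμ)]
    refine (norm_integral_le_of_norm_le_const (C := ε / 2) (.of_forall fun x => ?_)).trans_eq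
      (by simp)
    rw [← dist_eq_norm, dist_comm]
    refine (hGg x).trans ?_
    rw [mul_div_assoc', div_le_div_iff₀ (by positivity) two_pos]
    nlinarith [K.coe_nonneg]
  have hG_le := norm_integral_sub_integral_stdGaussian_le_of_contDiff hρ hG hGK hτ hτ_mem b
  have hρ_close := hclose ρ (hρ.integrable one_le_two)
  have hγ_close := hclose (stdGaussian E) IsGaussian.integrable_id
  rw [Real.norm_eq_abs, abs_le] at *
  constructor <;> linarith [hG_le.1, hG_le.2, hρ_close.1, hρ_close.2, hγ_close.1, hγ_close.2]

end SteinKernel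

section OrthogonalSteinKernel

variable {α β κ : Type*} [Fintype α] [Fintype β] [Fintype κ]
  [DecidableEq α] [DecidableEq β] [DecidableEq κ]

/-- The elementary infinitesimal rotation in the plane of the coordinates `i` and `j`. -/
def skewSingle (i j : κ) : Matrix κ κ ℝ := single i j 1 - single j i 1

omit [Fintype κ] in
theorem transpose_skewSingle (i j : κ) : (skewSingle i j)ᵀ = -skewSingle i j := by
  simp [skewSingle]

theorem skewSingle_mulVec_apply (i j s : κ) (y : κ → ℝ) :
    (skewSingle i j *ᵥ y) s = (if s = i then y j else 0) - if s = j then y i else 0 := by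
  simp [skewSingle, sub_mulVec, single_mulVec, Function.update_apply]

/-- The rows indexed by `e` of the vectors `M *ᵥ u a`, as a function of the matrix `M`. -/
noncomputable def mulVecRows (e : β → κ) (u : α → κ → ℝ) :
    Matrix κ κ ℝ →L[ℝ] EuclideanSpace ℝ (α × β) :=
  LinearMap.toContinuousLinearMap
    { toFun := fun M => WithLp.toLp 2 fun p => (M *ᵥ u p.1) (e p.2)
      map_add' := fun M M' => by ext; simp [add_mulVec]
      map_smul' := fun c M => by ext; simp [smul_mulVec] }

omit [DecidableEq α] [DecidableEq β] [DecidableEq κ] in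
theorem mulVecRows_apply (e : β → κ) (u : α → κ → ℝ) (M : Matrix κ κ ℝ) (p : α × β) :
    mulVecRows e u M p = (M *ᵥ u p.1) (e p.2) := rfl

/-- The operator `v ↦ x vᵀ x`, where the elements of `EuclideanSpace ℝ (α × β)` are seen as
matrices with rows indexed by `α` and columns indexed by `β`. -/
noncomputable def transposeSandwich (x : EuclideanSpace ℝ (α × β)) :
    EuclideanSpace ℝ (α × β) →L[ℝ] EuclideanSpace ℝ (α × β) :=
  toEuclideanCLM (𝕜 := ℝ) (.of fun p q => x (p.1, q.2) * x (q.1, p.2))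

theorem transposeSandwich_apply (x v : EuclideanSpace ℝ (α × β)) (p : α × β) :
    transposeSandwich x v p = ∑ a, ∑ i, x (p.1, i) * x (a, p.2) * v (a, i) := by
  simp [transposeSandwich, mulVec, dotProduct, Fintype.sum_prod_type]

/-- The Stein kernel of the law of `mulVecRows e u M` for a Haar distributed `M` and orthogonal
vectors `u a` of squared length `N`, the dimension. -/
noncomputable def orthogonalSteinKernel (N : ℝ) (x : EuclideanSpace ℝ (α × β)) :
    EuclideanSpace ℝ (α × β) →L[ℝ] EuclideanSpace ℝ (α × β) :=
  1 + (N - 1)⁻¹ • (1 - transposeSandwich x)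

theorem orthogonalSteinKernel_apply (N : ℝ) (x v : EuclideanSpace ℝ (α × β)) :
    orthogonalSteinKernel N x v = v + (N - 1)⁻¹ • (v - transposeSandwich x v) := rfl

theorem smul_sub_transposeSandwich {N : ℝ} (hN : N ≠ 1) (x v : EuclideanSpace ℝ (α × β)) :
    N • v - transposeSandwich x v = (N - 1) • orthogonalSteinKernel N x v := by
  rw [orthogonalSteinKernel_apply, smul_add, smul_inv_smul₀ (sub_ne_zero.mpr hN)]
  module

omit [DecidableEq α] [DecidableEq β] in
theorem sum_mulVecRows_skewSingle_mul (e : β → κ) (u : α → κ → ℝ)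
    (v : EuclideanSpace ℝ (α × β)) (M : Matrix κ κ ℝ) :
    ∑ i, ∑ t, ∑ a, v (a, i) * mulVecRows id u (skewSingle (e i) t * M) (a, t) =
      -((Fintype.card κ - 1) * ⟪v, mulVecRows e u M⟫_ℝ) := by
  have hi (i : β) : ∑ t, ∑ a, v (a, i) * mulVecRows id u (skewSingle (e i) t * M) (a, t) =
      -((Fintype.card κ - 1) * ∑ a, v (a, i) * mulVecRows e u M (a, i)) := by
    rw [Finset.sum_comm]
    simp_rw [mulVecRows_apply, ← mulVec_mulVec, skewSingle_mulVec_apply, ← Finset.mul_sum]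
    simp only [id_eq, Finset.sum_sub_distrib, Finset.sum_ite_eq', Finset.mem_univ, if_true,
      Finset.sum_const, Finset.card_univ, nsmul_eq_mul]
    rw [Finset.mul_sum, ← Finset.sum_neg_distrib]
    exact Finset.sum_congr rfl fun a _ => by ring
  rw [Finset.sum_congr rfl fun i _ => hi i, Finset.sum_neg_distrib, ← Finset.mul_sum,
    PiLp.inner_apply, Fintype.sum_prod_type_right]
  simp [mul_comm]

theorem sum_smul_mulVecRows_skewSingle_mul {e : β → κ} (he : Function.Injective e)
    {u : α → κ → ℝ} {N : ℝ} (hu : ∀ a b, u a ⬝ᵥ u b = if a = b then N else 0)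
    (v : EuclideanSpace ℝ (α × β)) {M : Matrix κ κ ℝ} (hM : Mᵀ * M = 1) :
    ∑ i, ∑ t, (∑ a, v (a, i) * mulVecRows id u M (a, t)) • mulVecRows e u (skewSingle (e i) t * M) =
      N • v - transposeSandwich (mulVecRows e u M) v := by
  set Y : α → κ → ℝ := fun a => M *ᵥ u a
  have hY (a b : α) : Y a ⬝ᵥ Y b = if a = b then N else 0 := by
    rw [← hu a b, dotProduct_mulVec, vecMul_mulVec, hM, vecMul_one]
  ext ⟨b, j⟩
  have hi (i : β) : ∑ t, (∑ a, v (a, i) * Y a t) * (skewSingle (e i) t *ᵥ Y b) (e j) =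
      (if i = j then N * v (b, i) else 0) - ∑ a, v (a, i) * Y a (e j) * Y b (e i) := by
    have hdot : ∑ t, (∑ a, v (a, i) * Y a t) * Y b t = N * v (b, i) := by
      simp_rw [Finset.sum_mul, mul_assoc]
      rw [Finset.sum_comm]
      simp_rw [← Finset.mul_sum]
      change ∑ a, v (a, i) * (Y a ⬝ᵥ Y b) = _
      simp [hY, mul_comm]
    simp_rw [skewSingle_mulVec_apply, he.eq_iff, mul_sub, Finset.sum_sub_distrib]
    congr 1
    · split_ifs with hji hij hij
      · exact hdot
      · exact absurd hji.symm hij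
      · exact absurd hij.symm hji
      · simp
    · simp [Finset.sum_mul]
  simp only [WithLp.ofLp_sum, Finset.sum_apply, WithLp.ofLp_smul, Pi.smul_apply, smul_eq_mul,
    mulVecRows_apply, id_eq, ← mulVec_mulVec]
  rw [Finset.sum_congr rfl fun i _ => hi i, Finset.sum_sub_distrib, Finset.sum_comm]
  simp only [Finset.sum_ite_eq', Finset.mem_univ, if_true, WithLp.ofLp_sub, Pi.sub_apply,
    WithLp.ofLp_smul, Pi.smul_apply, smul_eq_mul, transposeSandwich_apply, mulVecRows_apply]
  congr 1
  exact Finset.sum_congr rfl fun a _ => Finset.sum_congr rfl fun i _ => by ring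

theorem continuous_orthogonalSteinKernel (N : ℝ) :
    Continuous (orthogonalSteinKernel (α := α) (β := β) N) := by
  have hCLM : Continuous (toEuclideanCLM (𝕜 := ℝ) (n := α × β)) :=
    LinearMap.continuous_of_finiteDimensional
      (toEuclideanCLM (𝕜 := ℝ) (n := α × β)).toAlgEquiv.toLinearMap
  have hT : Continuous (transposeSandwich (α := α) (β := β)) :=
    hCLM.comp (continuous_matrix fun p q => by fun_prop)
  unfold orthogonalSteinKernel
  fun_prop

theorem integral_neg_sub_one_mul_add_eq_zero {μ : Measure (Matrix κ κ ℝ)}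
    [IsFiniteMeasure μ] (hμ : IsSpecialOrthogonalInvariant μ) {e : β → κ}
    (he : Function.Injective e) {u : α → κ → ℝ} {N : ℝ}
    (hu : ∀ a b, u a ⬝ᵥ u b = if a = b then N else 0)
    {φ : EuclideanSpace ℝ (α × β) → ℝ} (hφ : ContDiff ℝ 1 φ) (v : EuclideanSpace ℝ (α × β)) :
    ∫ M, -((Fintype.card κ - 1) * ⟪v, mulVecRows e u M⟫_ℝ) * φ (mulVecRows e u M) +
      fderiv ℝ φ (mulVecRows e u M) (N • v - transposeSandwich (mulVecRows e u M) v) ∂μ = 0 := by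
  let X := mulVecRows e u
  let ψ (i : β) (t : κ) : Matrix κ κ ℝ →L[ℝ] ℝ :=
    ∑ a, v (a, i) • (EuclideanSpace.proj (a, t)).comp (mulVecRows id u)
  have hψ (i : β) (t : κ) (M : Matrix κ κ ℝ) :
      ψ i t M = ∑ a, v (a, i) * mulVecRows id u M (a, t) := by
    simp [ψ]
  have hparts (i : β) (t : κ) :=
    hμ.integral_mul_comp_add_eq_zero X (ψ i t) hφ (transpose_skewSingle (e i) t)
  have hint (i : β) (t : κ) : Integrable (fun M => ψ i t (skewSingle (e i) t * M) * φ (X M) +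
      fderiv ℝ φ (X M) (ψ i t M • X (skewSingle (e i) t * M))) μ := by
    refine hμ.integrable (.add ?_ ?_)
    · have := hφ.continuous
      fun_prop
    · exact ((hφ.continuous_fderiv one_ne_zero).comp X.continuous).clm_apply (by fun_prop)
  have hsum : ∫ M, ∑ i, ∑ t, (ψ i t (skewSingle (e i) t * M) * φ (X M) +
      fderiv ℝ φ (X M) (ψ i t M • X (skewSingle (e i) t * M))) ∂μ = 0 := by
    rw [integral_finsetSum _ fun i _ => integrable_finsetSum _ fun t _ => hint i t]
    refine Finset.sum_eq_zero fun i _ => ?_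
    rw [integral_finsetSum _ fun t _ => hint i t]
    exact Finset.sum_eq_zero fun t _ => hparts i t
  rw [← hsum]
  refine integral_congr_ae ?_
  filter_upwards [hμ.ae_transpose_mul_self] with M hM
  simp_rw [Finset.sum_add_distrib, ← Finset.sum_mul, ← map_sum, hψ,
    sum_mulVecRows_skewSingle_mul, X, sum_smul_mulVecRows_skewSingle_mul he hu v hM]

theorem isSteinKernel_orthogonalSteinKernel {μ : Measure (Matrix κ κ ℝ)} [IsFiniteMeasure μ]
    (hμ : IsSpecialOrthogonalInvariant μ) {e : β → κ} (he : Function.Injective e)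
    {u : α → κ → ℝ} (hu : ∀ a b, u a ⬝ᵥ u b = if a = b then (Fintype.card κ : ℝ) else 0)
    (hκ : 1 < Fintype.card κ) :
    IsSteinKernel (μ.map (mulVecRows e u)) (orthogonalSteinKernel (Fintype.card κ)) := by
  intro φ hφ v
  have hN : (Fintype.card κ : ℝ) - 1 ≠ 0 := by
    rw [sub_ne_zero]; exact_mod_cast hκ.ne'
  have hl : Continuous fun x => φ x * ⟪v, x⟫_ℝ := by
    have := hφ.continuous
    fun_prop
  have hr : Continuous fun x => fderiv ℝ φ x (orthogonalSteinKernel (Fintype.card κ) x v) :=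
    (hφ.continuous_fderiv one_ne_zero).clm_apply
      ((continuous_orthogonalSteinKernel _).clm_apply continuous_const)
  have hX := (mulVecRows e u).continuous
  rw [← sub_eq_zero, ← integral_sub (hμ.integrable_map hX hl) (hμ.integrable_map hX hr),
    integral_map hX.aemeasurable (hl.fun_sub hr).aestronglyMeasurable,
    ← mul_right_inj' (neg_ne_zero.mpr hN), mul_zero, ← integral_const_mul,
    ← integral_neg_sub_one_mul_add_eq_zero hμ he hu hφ v]
  refine integral_congr_ae (.of_forall fun M => ?_)
  dsimp only
  rw [smul_sub_transposeSandwich (sub_ne_zero.mp hN), map_smul, smul_eq_mul]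
  ring

end OrthogonalSteinKernel

section SteinMoments

variable {E : Type*} [NormedAddCommGroup E] [InnerProductSpace ℝ E] [MeasurableSpace E]
  {ρ : Measure E} {τ : E → E →L[ℝ] E} {ι : Type*} [Fintype ι]

theorem IsSteinKernel.integral_inner (hτ : IsSteinKernel ρ τ) (hτ_cont : Continuous τ)
    (hρ : ∀ f : E → ℝ, Continuous f → Integrable f ρ) (b : OrthonormalBasis ι ℝ E) {Φ : E → E}
    (hΦ : ContDiff ℝ 1 Φ) :
    ∫ x, ⟪Φ x, x⟫_ℝ ∂ρ = ∫ x, ∑ i, ⟪b i, fderiv ℝ Φ x (τ x (b i))⟫_ℝ ∂ρ := by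
  have hΦ_cont := hΦ.continuous
  have hDτ (i : ι) : Continuous fun x => fderiv ℝ Φ x (τ x (b i)) :=
    (hΦ.continuous_fderiv one_ne_zero).clm_apply (hτ_cont.clm_apply continuous_const)
  rw [integral_finsetSum _ fun i _ => hρ _ (continuous_const.inner (hDτ i))]
  have hcoord (i : ι) : ∫ x, ⟪b i, fderiv ℝ Φ x (τ x (b i))⟫_ℝ ∂ρ =
      ∫ x, ⟪b i, Φ x⟫_ℝ * ⟪b i, x⟫_ℝ ∂ρ := by
    rw [hτ (fun x => ⟪b i, Φ x⟫_ℝ) (contDiff_const.inner ℝ hΦ) (b i)]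
    refine integral_congr_ae (.of_forall fun x => ?_)
    have hΦx := (hΦ.differentiable one_ne_zero x).hasFDerivAt
    simpa using congrArg (· (τ x (b i))) ((hasFDerivAt_const (b i) x).inner ℝ hΦx).fderiv.symm
  rw [Finset.sum_congr rfl fun i _ => hcoord i,
    ← integral_finsetSum _ fun i _ => hρ _ (by fun_prop)]
  refine integral_congr_ae (.of_forall fun x => ?_)
  simp_rw [← b.sum_inner_mul_inner (Φ x) x, real_inner_comm]

theorem IsSteinKernel.integral_norm_sq (hτ : IsSteinKernel ρ τ) (hτ_cont : Continuous τ)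
    (hρ : ∀ f : E → ℝ, Continuous f → Integrable f ρ) (b : OrthonormalBasis ι ℝ E) :
    ∫ x, ‖x‖ ^ 2 ∂ρ = ∫ x, ∑ i, ⟪b i, τ x (b i)⟫_ℝ ∂ρ := by
  simpa using hτ.integral_inner hτ_cont hρ b contDiff_id

theorem IsSteinKernel.integral_norm_pow_four (hτ : IsSteinKernel ρ τ) (hτ_cont : Continuous τ)
    (hρ : ∀ f : E → ℝ, Continuous f → Integrable f ρ) (b : OrthonormalBasis ι ℝ E) :
    ∫ x, ‖x‖ ^ 4 ∂ρ =
      ∫ x, 2 * ⟪x, τ x x⟫_ℝ + ‖x‖ ^ 2 * ∑ i, ⟪b i, τ x (b i)⟫_ℝ ∂ρ := by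
  have hfderiv (x w : E) :
      fderiv ℝ (fun y : E => ‖y‖ ^ 2 • y) x w = (2 * ⟪x, w⟫_ℝ) • x + ‖x‖ ^ 2 • w := by
    have hx : HasFDerivAt (fun y : E => ‖y‖ ^ 2 • y) _ x :=
      (hasFDerivAt_id x).norm_sq.smul (hasFDerivAt_id x)
    rw [hx.fderiv]
    simp [add_comm]
  have hcontr (x : E) : ∑ i, ⟪x, τ x (b i)⟫_ℝ * ⟪b i, x⟫_ℝ = ⟪x, τ x x⟫_ℝ := by
    calc _ = ⟪x, τ x (∑ i, ⟪b i, x⟫_ℝ • b i)⟫_ℝ := by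
          simp [inner_sum, real_inner_smul_right, mul_comm]
      _ = ⟪x, τ x x⟫_ℝ := by rw [b.sum_repr']
  have := hτ.integral_inner hτ_cont hρ b (Φ := fun y => ‖y‖ ^ 2 • y)
    ((contDiff_id.norm_sq ℝ).smul contDiff_id)
  simp_rw [hfderiv, inner_add_right, real_inner_smul_right, Finset.sum_add_distrib, mul_assoc,
    ← Finset.mul_sum, hcontr, real_inner_smul_left, real_inner_self_eq_norm_sq,
    ← pow_add] at this
  exact this

end SteinMoments

section OrthogonalMoments

variable {α β : Type*} [Fintype α] [Fintype β] [DecidableEq α] [DecidableEq β]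
  (x : EuclideanSpace ℝ (α × β))

theorem transposeSandwich_basisFun (p q : α × β) :
    transposeSandwich x (EuclideanSpace.basisFun _ ℝ q) p = x (p.1, q.2) * x (q.1, p.2) := by
  simp [transposeSandwich]

theorem sum_inner_transposeSandwich_basisFun :
    ∑ p, ⟪EuclideanSpace.basisFun _ ℝ p,
      transposeSandwich x (EuclideanSpace.basisFun _ ℝ p)⟫_ℝ = ‖x‖ ^ 2 := by
  rw [EuclideanSpace.norm_sq_eq]
  simp_rw [EuclideanSpace.basisFun_inner, transposeSandwich_basisFun]
  simp [sq]

theorem sum_norm_sq_transposeSandwich_basisFun :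
    ∑ p, ‖transposeSandwich x (EuclideanSpace.basisFun _ ℝ p)‖ ^ 2 = ‖x‖ ^ 4 := by
  have hx : ‖x‖ ^ 4 = (∑ p, x p ^ 2) * ∑ q, x q ^ 2 := by
    rw [← EuclideanSpace.real_norm_sq_eq]; ring
  simp_rw [EuclideanSpace.real_norm_sq_eq, transposeSandwich_basisFun, mul_pow, hx,
    Fintype.sum_prod_type, ← Finset.mul_sum, ← Finset.sum_mul]
  rw [← Finset.mul_sum, Finset.sum_comm]

theorem inner_transposeSandwich_self_nonneg : 0 ≤ ⟪x, transposeSandwich x x⟫_ℝ := by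
  have hx : ⟪x, transposeSandwich x x⟫_ℝ = ∑ a, ∑ b, (∑ i, x (a, i) * x (b, i)) ^ 2 := by
    simp_rw [PiLp.inner_apply, transposeSandwich_apply, Fintype.sum_prod_type, sq,
      Finset.sum_mul_sum]
    simp only [RCLike.inner_apply, conj_trivial, Finset.sum_mul]
    refine Finset.sum_congr rfl fun a _ => ?_
    rw [Finset.sum_comm]
    exact Finset.sum_congr rfl fun b _ => Finset.sum_congr rfl fun i _ =>
      Finset.sum_congr rfl fun j _ => by ring
  rw [hx]
  positivity

theorem sum_inner_orthogonalSteinKernel_basisFun (N : ℝ) :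
    ∑ p, ⟪EuclideanSpace.basisFun _ ℝ p,
      orthogonalSteinKernel N x (EuclideanSpace.basisFun _ ℝ p)⟫_ℝ =
    Fintype.card (α × β) + (N - 1)⁻¹ * (Fintype.card (α × β) - ‖x‖ ^ 2) := by
  rw [← sum_inner_transposeSandwich_basisFun x]
  simp_rw [orthogonalSteinKernel_apply, inner_add_right, real_inner_smul_right, inner_sub_right,
    Finset.sum_add_distrib, ← Finset.mul_sum, Finset.sum_sub_distrib, OrthonormalBasis.inner_eq_one]
  simp

theorem inner_orthogonalSteinKernel_self_le {N : ℝ} (hN : 1 < N) :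
    ⟪x, orthogonalSteinKernel N x x⟫_ℝ ≤ (1 + (N - 1)⁻¹) * ‖x‖ ^ 2 := by
  have hN_pos : 0 ≤ (N - 1)⁻¹ := inv_nonneg.mpr (sub_nonneg.mpr hN.le)
  rw [orthogonalSteinKernel_apply, inner_add_right, real_inner_smul_right, inner_sub_right,
    real_inner_self_eq_norm_sq]
  nlinarith [inner_transposeSandwich_self_nonneg x]

theorem sum_norm_sq_orthogonalSteinKernel_sub_basisFun (N : ℝ) :
    ∑ p, ‖orthogonalSteinKernel N x (EuclideanSpace.basisFun _ ℝ p) -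
      EuclideanSpace.basisFun _ ℝ p‖ ^ 2 =
    ((N - 1)⁻¹) ^ 2 * (Fintype.card (α × β) - 2 * ‖x‖ ^ 2 + ‖x‖ ^ 4) := by
  simp_rw [orthogonalSteinKernel_apply, add_sub_cancel_left, norm_smul, mul_pow, Real.norm_eq_abs,
    sq_abs, norm_sub_sq_real, ← Finset.mul_sum, Finset.sum_add_distrib, Finset.sum_sub_distrib,
    ← Finset.mul_sum, sum_inner_transposeSandwich_basisFun, sum_norm_sq_transposeSandwich_basisFun,
    OrthonormalBasis.norm_eq_one]
  simp

variable {ρ : Measure (EuclideanSpace ℝ (α × β))} [IsProbabilityMeasure ρ] {N : ℝ} (hN : 1 < N)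
  (hρ : ∀ f : EuclideanSpace ℝ (α × β) → ℝ, Continuous f → Integrable f ρ)
  (hτ : IsSteinKernel ρ (orthogonalSteinKernel N))
include hN hρ hτ

theorem integral_norm_sq_eq_card : ∫ x, ‖x‖ ^ 2 ∂ρ = Fintype.card (α × β) := by
  have htrace := hτ.integral_norm_sq (continuous_orthogonalSteinKernel N) hρ
    (EuclideanSpace.basisFun _ ℝ)
  simp_rw [sum_inner_orthogonalSteinKernel_basisFun] at htrace
  rw [integral_add (hρ _ (by fun_prop)) (hρ _ (by fun_prop)), integral_const_mul,
    integral_sub (hρ _ (by fun_prop)) (hρ _ (by fun_prop))] at htrace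
  simp only [integral_const, probReal_univ, one_smul] at htrace
  have := inv_pos.mpr (sub_pos.mpr hN)
  refine mul_left_cancel₀ (by positivity : 1 + (N - 1)⁻¹ ≠ 0) ?_
  linear_combination htrace

theorem integral_norm_pow_four_le :
    ∫ x, ‖x‖ ^ 4 ∂ρ ≤ (Fintype.card (α × β) : ℝ) ^ 2 + 2 * Fintype.card (α × β) := by
  set d : ℝ := (Fintype.card (α × β) : ℝ)
  set r := (N - 1)⁻¹
  have hτ_cont := continuous_orthogonalSteinKernel (α := α) (β := β) N
  have : 0 < r := inv_pos.mpr (sub_pos.mpr hN)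
  have hmono : ∫ x, ‖x‖ ^ 4 ∂ρ ≤ ∫ x, (1 + r) * (d + 2) * ‖x‖ ^ 2 - r * ‖x‖ ^ 4 ∂ρ := by
    rw [hτ.integral_norm_pow_four hτ_cont hρ (EuclideanSpace.basisFun _ ℝ)]
    simp_rw [sum_inner_orthogonalSteinKernel_basisFun]
    refine integral_mono (hρ _ (by fun_prop)) (hρ _ (by fun_prop)) fun x => ?_
    dsimp only
    linarith [inner_orthogonalSteinKernel_self_le x hN]
  rw [integral_sub (hρ _ (by fun_prop)) (hρ _ (by fun_prop)), integral_const_mul,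
    integral_const_mul, integral_norm_sq_eq_card hN hρ hτ] at hmono
  refine le_of_mul_le_mul_left ?_ (by positivity : 0 < 1 + r)
  linarith

theorem integral_sum_norm_sq_orthogonalSteinKernel_sub_le :
    ∫ x, ∑ p, ‖orthogonalSteinKernel N x (EuclideanSpace.basisFun _ ℝ p) -
      EuclideanSpace.basisFun _ ℝ p‖ ^ 2 ∂ρ ≤
    ((N - 1)⁻¹) ^ 2 * ((Fintype.card (α × β) : ℝ) ^ 2 + Fintype.card (α × β)) := by
  simp_rw [sum_norm_sq_orthogonalSteinKernel_sub_basisFun]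
  rw [integral_const_mul, integral_add (hρ _ (by fun_prop)) (hρ _ (by fun_prop)),
    integral_sub (hρ _ (by fun_prop)) (hρ _ (by fun_prop)), integral_const_mul,
    integral_norm_sq_eq_card hN hρ hτ]
  simp only [integral_const, probReal_univ, one_smul]
  refine mul_le_mul_of_nonneg_left ?_ (by positivity)
  linarith [integral_norm_pow_four_le hN hρ hτ]

end OrthogonalMoments

section OrthogonalFamily

variable {α β κ : Type*} [Fintype α] [Fintype β] [Fintype κ]
  [DecidableEq α] [DecidableEq κ]

theorem IsSpecialOrthogonalInvariant.memLp_map {μ : Measure (Matrix κ κ ℝ)} [IsFiniteMeasure μ]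
    (hμ : IsSpecialOrthogonalInvariant μ) {E F : Type*} [TopologicalSpace E]
    [SecondCountableTopology E] [MeasurableSpace E] [BorelSpace E] [NormedAddCommGroup F]
    {X : Matrix κ κ ℝ → E} (hX : Continuous X) {f : E → F} (hf : Continuous f) :
    MemLp f 2 (μ.map X) := by
  rw [memLp_two_iff_integrable_sq_norm hf.aestronglyMeasurable]
  exact hμ.integrable_map hX (hf.norm.pow 2)

theorem norm_integral_mulVecRows_sub_integral_stdGaussian_le {μ : Measure (Matrix κ κ ℝ)}
    [IsProbabilityMeasure μ] (hμ : IsSpecialOrthogonalInvariant μ) {e : β → κ}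
    (he : Function.Injective e) {u : α → κ → ℝ}
    (hu : ∀ a b, u a ⬝ᵥ u b = if a = b then (Fintype.card κ : ℝ) else 0)
    (hκ : 1 < Fintype.card κ) {g : EuclideanSpace ℝ (α × β) → ℝ} {K : ℝ≥0}
    (hgK : LipschitzWith K g) :
    ‖∫ M, g (mulVecRows e u M) ∂μ - ∫ x, g x ∂stdGaussian (EuclideanSpace ℝ (α × β))‖ ≤
      K * √((Fintype.card (α × β) : ℝ) ^ 2 + Fintype.card (α × β)) / (Fintype.card κ - 1) := by
  classical
  have hN : (1 : ℝ) < Fintype.card κ := by exact_mod_cast hκ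
  have hX := (mulVecRows e u).continuous
  have hτ := isSteinKernel_orthogonalSteinKernel hμ he hu hκ
  have := Measure.isProbabilityMeasure_map hX.aemeasurable (μ := μ)
  have hdiscrepancy := integral_sum_norm_sq_orthogonalSteinKernel_sub_le hN
    (fun f hf => hμ.integrable_map hX hf) hτ
  rw [← integral_map hX.aemeasurable hgK.continuous.aestronglyMeasurable]
  calc _ ≤ K * √(∫ x, ∑ p, ‖orthogonalSteinKernel (Fintype.card κ) x
          (EuclideanSpace.basisFun _ ℝ p) - EuclideanSpace.basisFun _ ℝ p‖ ^ 2
            ∂μ.map (mulVecRows e u)) :=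
        norm_integral_sub_integral_stdGaussian_le_of_isSteinKernel
          (hμ.memLp_map hX continuous_id) hτ
          (hμ.memLp_map hX (continuous_orthogonalSteinKernel _)) _ hgK
    _ ≤ K * √(((Fintype.card κ - 1 : ℝ)⁻¹) ^ 2 *
          ((Fintype.card (α × β) : ℝ) ^ 2 + Fintype.card (α × β))) := by gcongr
    _ = _ := by
        rw [Real.sqrt_mul (sq_nonneg _), Real.sqrt_sq (inv_nonneg.mpr (sub_nonneg.mpr hN.le))]
        ring

end OrthogonalFamily

section GaussianLaw

variable {ι κ : Type*} [Fintype ι] [Fintype κ] [DecidableEq κ]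

theorem IsGaussianLaw.map_toLp_eq_map_stdGaussian {A : Matrix ι κ ℝ} {γ : Measure (ι → ℝ)}
    (hγ : IsGaussianLaw (A * Aᵀ) γ) :
    γ.map (WithLp.toLp 2) = (stdGaussian (EuclideanSpace ℝ κ)).map (toEuclideanLin A) := by
  obtain ⟨hγ_prob, hγ_map⟩ := hγ
  have hA : Continuous (toEuclideanLin A) := LinearMap.continuous_of_finiteDimensional _
  have hp : Measurable (WithLp.toLp 2 : (ι → ℝ) → EuclideanSpace ℝ ι) := by fun_prop
  have := Measure.isProbabilityMeasure_map hA.aemeasurable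
    (μ := stdGaussian (EuclideanSpace ℝ κ))
  have := Measure.isProbabilityMeasure_map hp.aemeasurable (μ := γ)
  refine Measure.ext_of_charFun (funext fun t => ?_)
  have hvar : ∑ i, ∑ j, t i * (A * Aᵀ) i j * t j = ‖WithLp.toLp 2 (Aᵀ *ᵥ t)‖ ^ 2 := by
    calc _ = t ⬝ᵥ (A * Aᵀ) *ᵥ t := by simp [dotProduct, mulVec, Finset.mul_sum, mul_assoc]
      _ = (Aᵀ *ᵥ t) ⬝ᵥ (Aᵀ *ᵥ t) := by
          rw [← mulVec_mulVec, dotProduct_mulVec, ← mulVec_transpose]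
      _ = _ := by
          rw [EuclideanSpace.real_norm_sq_eq]
          exact Finset.sum_congr rfl fun i _ => (sq _).symm
  have hγt : charFun (γ.map (WithLp.toLp 2)) t = charFun (γ.map fun y => ∑ i, t i * y i) 1 := by
    have ht : Continuous fun y : ι → ℝ => ∑ i, t i * y i := by fun_prop
    rw [charFun_apply, charFun_apply_real, integral_map hp.aemeasurable (by fun_prop),
      integral_map ht.aemeasurable (by fun_prop)]
    simp [PiLp.inner_apply, mul_comm]
  have hAt : charFun ((stdGaussian (EuclideanSpace ℝ κ)).map (toEuclideanLin A)) t =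
      charFun (stdGaussian (EuclideanSpace ℝ κ)) (WithLp.toLp 2 (Aᵀ *ᵥ t)) := by
    rw [charFun_apply, charFun_apply, integral_map hA.aemeasurable (by fun_prop)]
    simp [EuclideanSpace.inner_eq_star_dotProduct, dotProduct_mulVec, ← mulVec_transpose]
  rw [hγt, hγ_map, hvar, charFun_gaussianReal, hAt, charFun_stdGaussian]
  simp [neg_div]

end GaussianLaw

section Gram

variable {α ι κ : Type*} [Fintype ι] [Fintype κ]

theorem exists_orthogonal_family [Fintype α] (z : α → κ → ℝ) {N : ℝ} (hN : 0 < N) :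
    ∃ r ≤ Fintype.card α, ∃ (u : Fin r → κ → ℝ) (B : Matrix α (Fin r) ℝ),
      (∀ i j, u i ⬝ᵥ u j = if i = j then N else 0) ∧ z = fun a => ∑ i, B a i • u i := by
  let S := Submodule.span ℝ (Set.range fun a => (WithLp.toLp 2 (z a) : EuclideanSpace ℝ κ))
  let v := stdOrthonormalBasis ℝ S
  let y (a : α) : S := ⟨WithLp.toLp 2 (z a), Submodule.subset_span ⟨a, rfl⟩⟩
  refine ⟨Module.finrank ℝ S, finrank_range_le_card _,
    fun i => √N • (v i : EuclideanSpace ℝ κ).ofLp,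
    .of fun a i => (√N)⁻¹ * ⟪v i, y a⟫_ℝ, fun i j => ?_, funext fun a => ?_⟩
  · have h := orthonormal_iff_ite.mp v.orthonormal i j
    rw [Submodule.coe_inner, EuclideanSpace.inner_eq_star_dotProduct, star_trivial,
      dotProduct_comm] at h
    rw [smul_dotProduct, dotProduct_smul, h, smul_smul, Real.mul_self_sqrt hN.le]
    simp
  · have h := congrArg (fun s : S => (s : EuclideanSpace ℝ κ).ofLp) (v.sum_repr' (y a))
    simpa [y, smul_smul, mul_right_comm, (Real.sqrt_pos.mpr hN).ne'] using h.symm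

variable [DecidableEq ι]

theorem sum_smul_dotProduct_sum_smul {u : ι → κ → ℝ} {N : ℝ}
    (hu : ∀ i j, u i ⬝ᵥ u j = if i = j then N else 0) (B : Matrix α ι ℝ) (a b : α) :
    (∑ i, B a i • u i) ⬝ᵥ (∑ i, B b i • u i) = N * (B * Bᵀ) a b := by
  simp [sum_dotProduct, dotProduct_sum, hu, mul_apply, Finset.mul_sum, mul_comm, mul_left_comm]

variable {β : Type*} [Fintype β] [DecidableEq β]

theorem toEuclideanLin_kronecker_one_apply (B : Matrix α ι ℝ) (x : EuclideanSpace ℝ (ι × β))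
    (p : α × β) :
    toEuclideanLin (B ⊗ₖ (1 : Matrix β β ℝ)) x p = ∑ i, B p.1 i * x (i, p.2) := by
  simp [mulVec, dotProduct, Fintype.sum_prod_type, one_apply]

theorem norm_toEuclideanLin_kronecker_one_le [Fintype α] (B : Matrix α ι ℝ)
    (x : EuclideanSpace ℝ (ι × β)) :
    ‖toEuclideanLin (B ⊗ₖ (1 : Matrix β β ℝ)) x‖ ≤ √(B * Bᵀ).trace * ‖x‖ := by
  have htrace : (B * Bᵀ).trace = ∑ a, ∑ i, B a i ^ 2 := by
    simp [trace, mul_apply, sq]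
  rw [← pow_le_pow_iff_left₀ (norm_nonneg _) (by positivity) two_ne_zero, mul_pow,
    Real.sq_sqrt (by rw [htrace]; positivity), htrace, EuclideanSpace.real_norm_sq_eq,
    EuclideanSpace.real_norm_sq_eq, Fintype.sum_prod_type, Finset.sum_mul]
  simp_rw [toEuclideanLin_kronecker_one_apply, Fintype.sum_prod_type_right,
    Finset.mul_sum (s := Finset.univ (α := β))]
  gcongr
  exact Finset.sum_mul_sq_le_sq_mul_sq _ _ _

theorem mulVecRows_sum_smul [Fintype α] (e : β → κ) (u : ι → κ → ℝ) (B : Matrix α ι ℝ)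
    (M : Matrix κ κ ℝ) :
    mulVecRows e (fun a => ∑ i, B a i • u i) M =
      toEuclideanLin (B ⊗ₖ (1 : Matrix β β ℝ)) (mulVecRows e u M) := by
  ext p
  rw [toEuclideanLin_kronecker_one_apply]
  simp [mulVecRows_apply, mulVec_sum, mulVec_smul]

end Gram

section MulVecRows

variable {α β κ : Type*} [Fintype α] [Fintype β] [Fintype κ] [DecidableEq β] [DecidableEq κ]
  {μ : Measure (Matrix κ κ ℝ)} [IsProbabilityMeasure μ] (hμ : IsSpecialOrthogonalInvariant μ)
  {e : β → κ} (he : Function.Injective e) (hκ : 1 < Fintype.card κ)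
  {γ : Measure (α × β → ℝ)} {g : EuclideanSpace ℝ (α × β) → ℝ} {K : ℝ≥0}
  (hgK : LipschitzWith K g)
include hμ he hκ hgK

theorem norm_integral_mulVecRows_sum_smul_sub_integral_le {ι : Type*} [Fintype ι] [DecidableEq ι]
    {u : ι → κ → ℝ} (hu : ∀ i j, u i ⬝ᵥ u j = if i = j then (Fintype.card κ : ℝ) else 0)
    (B : Matrix α ι ℝ) (hγ : IsGaussianLaw ((B * Bᵀ) ⊗ₖ (1 : Matrix β β ℝ)) γ) :
    ‖∫ M, g (mulVecRows e (fun a => ∑ i, B a i • u i) M) ∂μ - ∫ y, g (WithLp.toLp 2 y) ∂γ‖ ≤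
      K * √(B * Bᵀ).trace * √((Fintype.card (ι × β) : ℝ) ^ 2 + Fintype.card (ι × β)) /
        (Fintype.card κ - 1) := by
  let A := B ⊗ₖ (1 : Matrix β β ℝ)
  have hA : LipschitzWith (√(B * Bᵀ).trace).toNNReal (toEuclideanLin A) :=
    AddMonoidHomClass.lipschitz_of_bound _ _ (norm_toEuclideanLin_kronecker_one_le B)
  have hAA : A * Aᵀ = (B * Bᵀ) ⊗ₖ 1 := by
    simp [A, ← kroneckerMap_transpose, ← mul_kronecker_mul]
  have hγ_map := IsGaussianLaw.map_toLp_eq_map_stdGaussian (hAA ▸ hγ)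
  have hγ_int : ∫ y, g (WithLp.toLp 2 y) ∂γ = ∫ x, g (toEuclideanLin A x) ∂stdGaussian _ := by
    rw [← integral_map hA.continuous.aemeasurable hgK.continuous.aestronglyMeasurable, ← hγ_map,
      integral_map (by fun_prop) hgK.continuous.aestronglyMeasurable]
  simp_rw [mulVecRows_sum_smul, hγ_int]
  simpa using norm_integral_mulVecRows_sub_integral_stdGaussian_le hμ he hu hκ (hgK.comp hA)

theorem norm_integral_mulVecRows_sub_integral_le (z : α → κ → ℝ)
    (hγ : IsGaussianLaw
      (.of (fun a b => z a ⬝ᵥ z b / Fintype.card κ) ⊗ₖ (1 : Matrix β β ℝ)) γ) :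
    ‖∫ M, g (mulVecRows e z M) ∂μ - ∫ y, g (WithLp.toLp 2 y) ∂γ‖ ≤
      K * √(∑ a, z a ⬝ᵥ z a / Fintype.card κ) *
        √((Fintype.card (α × β) : ℝ) ^ 2 + Fintype.card (α × β)) / (Fintype.card κ - 1) := by
  have hN : (1 : ℝ) < Fintype.card κ := by exact_mod_cast hκ
  obtain ⟨r, hr, u, B, hu, rfl⟩ :=
    exists_orthogonal_family z (N := Fintype.card κ) (zero_lt_one.trans hN)
  have hdiv (a b : α) :
      (∑ i, B a i • u i) ⬝ᵥ (∑ i, B b i • u i) / Fintype.card κ = (B * Bᵀ) a b := by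
    rw [sum_smul_dotProduct_sum_smul hu, mul_div_cancel_left₀ _ (zero_lt_one.trans hN).ne']
  simp_rw [hdiv] at hγ ⊢
  have hcard : Fintype.card (Fin r × β) ≤ Fintype.card (α × β) := by
    rw [Fintype.card_prod, Fintype.card_fin, Fintype.card_prod]
    gcongr
  refine (norm_integral_mulVecRows_sum_smul_sub_integral_le hμ he hκ hgK hu B hγ).trans ?_
  have := sub_pos.mpr hN
  rw [trace]
  simp only [diag_apply]
  gcongr

end MulVecRows

section ZeroExtension

variable {ι κ : Type*} [Fintype ι] [Fintype κ] {e : ι → κ}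

theorem dotProduct_extend_zero (he : Function.Injective e) (v : κ → ℝ) (z : ι → ℝ) :
    v ⬝ᵥ Function.extend e z 0 = (v ∘ e) ⬝ᵥ z :=
  (Fintype.sum_of_injective e he _ _
    (fun j hj => by simp [Function.extend_apply' _ _ _ hj])
    (fun i => by simp [he.extend_apply])).symm

theorem extend_zero_dotProduct_extend_zero (he : Function.Injective e) (z z' : ι → ℝ) :
    Function.extend e z 0 ⬝ᵥ Function.extend e z' 0 = z ⬝ᵥ z' := by
  rw [dotProduct_extend_zero he, Function.extend_comp he]

end ZeroExtension

section SUO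

variable {m k n : ℕ} (hm : m ≤ n) (hk : k ≤ n)

theorem continuous_suoOfHaar : Continuous (suoOfHaar hm hk) := by
  unfold suoOfHaar
  fun_prop

theorem suoOfHaar_mulVec (M : Matrix (Fin n) (Fin n) ℝ) (z : Fin k → ℝ) (i : Fin m) :
    (suoOfHaar hm hk M *ᵥ z) i =
      (M *ᵥ (√(n / k) • Function.extend (Fin.castLE hk) z 0)) (Fin.castLE hm i) := by
  rw [suoOfHaar, smul_mulVec, mulVec_smul, Pi.smul_apply, Pi.smul_apply]
  exact congrArg _ (dotProduct_extend_zero (Fin.castLE_injective hk) _ z).symm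

theorem norm_integral_suoOfHaar_mulVec_sub_integral_le (hn : 2 ≤ n)
    {μ : Measure (Matrix (Fin n) (Fin n) ℝ)} [IsProbabilityMeasure μ]
    (hμ : IsSpecialOrthogonalInvariant μ) {α : Type*} [Fintype α] (z : α → Fin k → ℝ)
    {γ : Measure (α × Fin m → ℝ)}
    (hγ : IsGaussianLaw (.of (fun a b => z a ⬝ᵥ z b / k) ⊗ₖ (1 : Matrix (Fin m) (Fin m) ℝ)) γ)
    {g : EuclideanSpace ℝ (α × Fin m) → ℝ} {K : ℝ≥0} (hgK : LipschitzWith K g) :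
    ‖∫ W, g (WithLp.toLp 2 fun p => (W *ᵥ z p.1) p.2) ∂μ.map (suoOfHaar hm hk) -
        ∫ y, g (WithLp.toLp 2 y) ∂γ‖ ≤
      K * √(∑ a, z a ⬝ᵥ z a / k) *
        √((Fintype.card (α × Fin m) : ℝ) ^ 2 + Fintype.card (α × Fin m)) / (n - 1) := by
  have hn_ne : (n : ℝ) ≠ 0 := by positivity
  let w (a : α) : Fin n → ℝ := √(n / k) • Function.extend (Fin.castLE hk) (z a) 0
  have hw (a b : α) : w a ⬝ᵥ w b / n = z a ⬝ᵥ z b / k := by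
    rw [smul_dotProduct, dotProduct_smul,
      extend_zero_dotProduct_extend_zero (Fin.castLE_injective hk), smul_smul,
      Real.mul_self_sqrt (by positivity), smul_eq_mul]
    field_simp
  have hrows (M : Matrix (Fin n) (Fin n) ℝ) :
      WithLp.toLp 2 (fun p : α × Fin m => (suoOfHaar hm hk M *ᵥ z p.1) p.2) =
        mulVecRows (Fin.castLE hm) w M :=
    PiLp.ext fun p => suoOfHaar_mulVec hm hk M (z p.1) p.2
  have hmeas : Continuous fun W : Matrix (Fin m) (Fin k) ℝ =>
      g (WithLp.toLp 2 fun p : α × Fin m => (W *ᵥ z p.1) p.2) := by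
    have := hgK.continuous
    fun_prop
  rw [integral_map (continuous_suoOfHaar hm hk).aemeasurable hmeas.aestronglyMeasurable]
  simp_rw [hrows, ← hw] at hγ ⊢
  simpa only [Fintype.card_fin] using norm_integral_mulVecRows_sub_integral_le hμ
    (Fin.castLE_injective hm) (by rwa [Fintype.card_fin]) hgK w (by simpa only [Fintype.card_fin])

end SUO

theorem IsHaarO.isSpecialOrthogonalInvariant {n : ℕ} {μ : Measure (Matrix (Fin n) (Fin n) ℝ)}
    (hμ : IsHaarO n μ) : IsSpecialOrthogonalInvariant μ :=
  ⟨hμ.2.1, fun Q hQ _ => hμ.2.2 Q hQ⟩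

theorem suo_mulVec_wasserstein_general {m k n : ℕ} (hm : m ≤ n) (hk : k ≤ n) (hk_pos : 0 < k)
    (hn : 2 ≤ n) {μ : Measure (Matrix (Fin n) (Fin n) ℝ)} [IsProbabilityMeasure μ]
    (hμ : IsSpecialOrthogonalInvariant μ)
    (z z' : Fin k → ℝ) (hz : z ⬝ᵥ z = (k : ℝ)) (hz' : z' ⬝ᵥ z' = (k : ℝ))
    (c : ℝ) (hc : c = z ⬝ᵥ z' / (k : ℝ))
    (γ : Measure (Fin 2 × Fin m → ℝ))
    (hγ : IsGaussianLaw (!![1, c; c, 1] ⊗ₖ (1 : Matrix (Fin m) (Fin m) ℝ)) γ)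
    (g : (Fin 2 × Fin m → ℝ) → ℝ)
    (hg : ∀ x y : Fin 2 × Fin m → ℝ, |g x - g y| ≤ √(∑ p, (x p - y p) ^ 2)) :
    |(∫ W, g (fun p => W.mulVec (if p.1 = 0 then z else z') p.2) ∂μ.map (suoOfHaar hm hk)) -
        ∫ y, g y ∂γ| ≤ 4 * m / (n - 1) := by
  let Z (a : Fin 2) : Fin k → ℝ := if a = 0 then z else z'
  have hk_ne : (k : ℝ) ≠ 0 := by positivity
  have hgram : .of (fun a b => Z a ⬝ᵥ Z b / k) = !![1, c; c, 1] := by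
    ext a b
    fin_cases a <;> fin_cases b <;> simp [Z, hz, hz', hc, hk_ne, dotProduct_comm z' z]
  have hg_lip : LipschitzWith 1 fun x : EuclideanSpace ℝ (Fin 2 × Fin m) => g x.ofLp :=
    .of_dist_le_mul fun x y => by
      simpa [EuclideanSpace.dist_eq, Real.dist_eq] using hg x.ofLp y.ofLp
  refine (norm_integral_suoOfHaar_mulVec_sub_integral_le hm hk hn hμ Z (hgram ▸ hγ)
    hg_lip).trans ?_
  have htrace : ∑ a, Z a ⬝ᵥ Z a / (k : ℝ) = 2 := by
    norm_num [Z, hz, hz', hk_ne]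
  have hdim : √2 * √((2 * m : ℝ) ^ 2 + 2 * m) ≤ 4 * m := by
    have hm_sq : (m : ℝ) ≤ m ^ 2 := by exact_mod_cast Nat.le_self_pow two_ne_zero m
    rw [← Real.sqrt_mul zero_le_two, Real.sqrt_le_left (by positivity)]
    linarith
  have hn_pos : (0 : ℝ) ≤ n - 1 := by
    rw [sub_nonneg]
    exact_mod_cast one_le_two.trans hn
  simpa [htrace] using div_le_div_of_nonneg_right hdim hn_pos

/-- **Corollary.** For SUO-distributed `W`, inputs `z ≠ z'` with `‖z‖² = ‖z'‖² = k`,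
`c = zᵀz'/k`, and `(y, y')` centered Gaussian with covariance `[[1,c],[c,1]] ⊗ I_m`,
if `n = max k m ≥ 2` then for every `1`-Lipschitz (Euclidean) `g : ℝ^{2m} → ℝ`,
`|E[g(Wz, Wz')] - E[g(y, y')]| ≤ 4m/(n-1)`. -/
theorem suo_mulVec_wasserstein (m k : ℕ) (hm : 0 < m) (hk : 0 < k)
    (hn : 2 ≤ max k m)
    (ν : Measure (Matrix (Fin m) (Fin k) ℝ)) (hν : IsSUO m k ν)
    (z z' : Fin k → ℝ) (hz : z ⬝ᵥ z = (k : ℝ)) (hz' : z' ⬝ᵥ z' = (k : ℝ))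
    (hne : z ≠ z') (c : ℝ) (hc : c = z ⬝ᵥ z' / (k : ℝ))
    (γ : Measure (Fin 2 × Fin m → ℝ))
    (hγ : IsGaussianLaw (!![1, c; c, 1] ⊗ₖ (1 : Matrix (Fin m) (Fin m) ℝ)) γ) :
    ∀ g : (Fin 2 × Fin m → ℝ) → ℝ,
      (∀ x y : Fin 2 × Fin m → ℝ, |g x - g y| ≤ Real.sqrt (∑ p, (x p - y p) ^ 2)) →
      |(∫ W, g (fun p => W.mulVec (if p.1 = 0 then z else z') p.2) ∂ν) -
          ∫ y, g y ∂γ| ≤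
        4 * (m : ℝ) / (((max k m : ℕ) : ℝ) - 1) := by
  obtain ⟨μ, hμ, rfl⟩ := hν
  have := hμ.1
  exact suo_mulVec_wasserstein_general _ _ hk hn hμ.isSpecialOrthogonalInvariant z z' hz hz' c hc
    γ hγ
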